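/- arXiv:2301.09104 — 4 statements merged into one kernel-verified Lean document; each statement's English description precedes it below -/
import Mathlib

section
/- Let λ̃ ∈ ℕ^{n+k+2} be a weight vector on the variables of S such that (i) every element of the sequence 𝒜 is λ̃-homogeneous, i.e. λ̃ assigns equal weights to x_{v_j} and x_{i_{j+2}} for 0 ≤ j ≤ k−2, to x_{s_1} and x_{i_{k−1}}, and to x_{s_2} and x_{i_1}; and (ii) the λ̃-initial ideal of I_{Π,M} equals M_{Π,M}. Let I_{Π,M,t} ⊆ S[t] be the λ̃-homogenization of I_{Π,M}, namely the ideal generated by g^h for all g ∈ I_{Π,M}, where for g = Σ_u a_u x^u one sets g^h = Σ_u a_u x^u t^{w−λ̃·u} with w = max{λ̃·u : a_u ≠ 0}. Then 𝒜 is a regular sequence on S[t]/I_{Π,M,t}. -/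
noncomputable section

open MvPolynomial

/-- Variable type of `S = K[x_1,…,x_{n+1}, x_{v_0},…,x_{v_{k-2}}, x_{s_1}, x_{s_2}]`,
a polynomial ring in `n + k + 2` variables. -/
abbrev SVar (n k : ℕ) := Fin (n + 1) ⊕ (Fin (k - 1) ⊕ Fin 2)

/-- The variable `x_j` of `S` (`1 ≤ j ≤ n + 1`). -/
def xvS (n k : ℕ) (j : ℕ) : SVar n k :=
  Sum.inl ⟨(j - 1) % (n + 1), Nat.mod_lt _ (Nat.succ_pos n)⟩

/-- The variable `x_{v_j}` of `S` (`0 ≤ j ≤ k - 2`). -/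
def vvS (n k : ℕ) (j : ℕ) : SVar n k :=
  if h : j < k - 1 then Sum.inr (Sum.inl ⟨j, h⟩) else Sum.inl ⟨0, Nat.succ_pos n⟩

/-- The variable `x_{s_1}` of `S`. -/
def s1S (n k : ℕ) : SVar n k := Sum.inr (Sum.inr 0)

/-- The variable `x_{s_2}` of `S`. -/
def s2S (n k : ℕ) : SVar n k := Sum.inr (Sum.inr 1)

/-- `as` is a regular sequence on the module `R/N`:  each `as_j` is a nonzerodivisor on
`R/(N + (as_0, …, as_{j-1}))` and `R/(N + (as))` is nonzero. -/
def IsRegSeqOnQuot (R : Type*) [CommRing R] (as : List R) (N : Ideal R) : Prop :=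
  (∀ (j : ℕ) (hj : j < as.length) (f : R),
      as.get ⟨j, hj⟩ * f ∈ N ⊔ Ideal.span {a | a ∈ as.take j} →
      f ∈ N ⊔ Ideal.span {a | a ∈ as.take j}) ∧
  N ⊔ Ideal.span {a | a ∈ as} ≠ ⊤

open Classical in
/-- The `λ`-weight of an exponent vector. -/
def wdegS (σ : Type*) [Fintype σ] (lam : σ → ℕ) (u : σ →₀ ℕ) : ℕ := ∑ s, lam s * u s

open Classical in
/-- The `λ`-initial form of a polynomial: the sum of its terms of maximal `λ`-weight. -/
def initFormS (σ : Type*) [Fintype σ] (K : Type*) [Field K] (lam : σ → ℕ)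
    (f : MvPolynomial σ K) : MvPolynomial σ K :=
  ∑ u ∈ f.support.filter (fun u => wdegS σ lam u = f.support.sup (wdegS σ lam)),
    monomial u (coeff u f)

/-- The `λ`-initial ideal of an ideal. -/
def initIdealS (σ : Type*) [Fintype σ] (K : Type*) [Field K] (lam : σ → ℕ)
    (I : Ideal (MvPolynomial σ K)) : Ideal (MvPolynomial σ K) :=
  Ideal.span { g | ∃ f ∈ I, f ≠ 0 ∧ g = initFormS σ K lam f }

open Classical in
/-- The `λ`-homogenization `g^h = ∑_u a_u x^u t^{w - λ·u}` of `g = ∑_u a_u x^u`,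
where `w = max{λ·u : a_u ≠ 0}`, as an element of `S[t]`. -/
def homogPoly (σ : Type*) [Fintype σ] (K : Type*) [Field K] (lam : σ → ℕ)
    (g : MvPolynomial σ K) : Polynomial (MvPolynomial σ K) :=
  ∑ u ∈ g.support, Polynomial.C (monomial u (coeff u g)) *
    Polynomial.X ^ (g.support.sup (wdegS σ lam) - wdegS σ lam u)

/-- The `λ`-homogenization of an ideal: the ideal of `S[t]` generated by all `g^h`, `g ∈ I`. -/
def homogIdeal (σ : Type*) [Fintype σ] (K : Type*) [Field K] (lam : σ → ℕ)
    (I : Ideal (MvPolynomial σ K)) : Ideal (Polynomial (MvPolynomial σ K)) :=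
  Ideal.span { h | ∃ g ∈ I, h = homogPoly σ K lam g }

/-! ### Weakly regular sequences modulo an ideal -/

def WR {R : Type*} [CommRing R] (L : List R) (J : Ideal R) : Prop :=
  ∀ l₁ e l₂, L = l₁ ++ e :: l₂ → ∀ f, e * f ∈ J ⊔ Ideal.span {a | a ∈ l₁} →
    f ∈ J ⊔ Ideal.span {a | a ∈ l₁}

theorem WR_nil {R : Type*} [CommRing R] (J : Ideal R) : WR [] J := by
  intro l₁ e l₂ h
  simp at h

theorem span_cons_aux {R : Type*} [CommRing R] (e : R) (l : List R) (J : Ideal R) :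
    J ⊔ Ideal.span {a | a ∈ e :: l} = (J ⊔ Ideal.span {e}) ⊔ Ideal.span {a | a ∈ l} := by
  have : {a | a ∈ e :: l} = {e} ∪ {a | a ∈ l} := by
    ext a; simp
  rw [this, Ideal.span_union, sup_assoc]

theorem WR_cons {R : Type*} [CommRing R] (e : R) (l : List R) (J : Ideal R) :
    WR (e :: l) J ↔ (∀ f, e * f ∈ J → f ∈ J) ∧ WR l (J ⊔ Ideal.span {e}) := by
  constructor
  · intro h
    refine ⟨?_, ?_⟩
    · have := h [] e l rfl
      simpa using this
    · intro l₁ e' l₂ hl f hf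
      have := h (e :: l₁) e' l₂ (by simp [hl]) f
      rw [span_cons_aux] at this
      exact this hf
  · rintro ⟨h1, h2⟩ l₁ e' l₂ hl f hf
    cases l₁ with
    | nil =>
      simp only [List.nil_append, List.cons.injEq] at hl
      obtain ⟨rfl, rfl⟩ := hl
      simp at hf ⊢
      exact h1 f hf
    | cons a l₁ =>
      simp only [List.cons_append, List.cons.injEq] at hl
      obtain ⟨rfl, rfl⟩ := hl
      rw [span_cons_aux] at hf ⊢
      exact h2 l₁ e' l₂ rfl f hf

theorem mem_sup_span_one {R : Type*} [CommRing R] {J : Ideal R} {a f : R} :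
    f ∈ J ⊔ Ideal.span {a} ↔ ∃ g, f - a * g ∈ J := by
  constructor
  · intro h
    obtain ⟨x, hx, y, hy, rfl⟩ := Submodule.mem_sup.1 h
    obtain ⟨g, rfl⟩ := Ideal.mem_span_singleton'.1 hy
    exact ⟨g, by convert hx using 1; ring⟩
  · rintro ⟨g, hg⟩
    have : f = (f - a * g) + a * g := by ring
    rw [this]
    refine Ideal.add_mem _ (Ideal.mem_sup_left hg) (Ideal.mem_sup_right ?_)
    exact Ideal.mul_mem_right _ _ (Ideal.mem_span_singleton_self a)

/-- Short exact sequence `0 → R/(J:a) → R/J → R/(J+a) → 0`. -/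
theorem WR_ses {R : Type*} [CommRing R] (a : R) (L : List R) :
    ∀ (J J' : Ideal R), (∀ f, a * f ∈ J ↔ f ∈ J') → WR L J' → WR L (J ⊔ Ideal.span {a}) →
      WR L J := by
  induction L with
  | nil => intro J J' _ _ _; exact WR_nil J
  | cons e l ih =>
    intro J J' hc h1 h2
    rw [WR_cons] at h1 h2 ⊢
    obtain ⟨h1, h1'⟩ := h1
    obtain ⟨h2, hquot⟩ := h2
    refine ⟨?_, ih _ (J' ⊔ Ideal.span {e}) ?_ h1' ?_⟩
    · intro f hf
      obtain ⟨g, hg⟩ := mem_sup_span_one.1 (h2 f (Ideal.mem_sup_left hf))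
      have h3 : a * (e * g) ∈ J := by
        have := J.sub_mem hf (J.mul_mem_left e hg)
        convert this using 1; ring
      have h4 := (hc g).2 (h1 g ((hc _).1 h3))
      convert J.add_mem hg h4 using 1; ring
    · intro f
      rw [mem_sup_span_one, mem_sup_span_one]
      constructor
      · rintro ⟨h, hh⟩
        have : h ∈ J ⊔ Ideal.span {a} := by
          apply h2
          rw [mem_sup_span_one]
          refine ⟨f, ?_⟩
          convert J.neg_mem hh using 1; ring
        obtain ⟨h', hh'⟩ := mem_sup_span_one.1 this
        refine ⟨h', (hc _).1 ?_⟩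
        convert J.add_mem hh (J.mul_mem_left e hh') using 1; ring
      · rintro ⟨g, hg⟩
        refine ⟨a * g, ?_⟩
        convert (hc _).2 hg using 1; ring
    · rw [sup_right_comm]
      exact hquot

/-- Transfer along a surjective map. -/
theorem WR_comap {R T : Type*} [CommRing R] [CommRing T] (φ : R →+* T)
    (hφ : Function.Surjective φ) (L : List R) :
    ∀ (M : Ideal T), WR (L.map φ) M → WR L (M.comap φ) := by
  induction L with
  | nil => intro M _; exact WR_nil _
  | cons e l ih =>
    intro M h
    rw [List.map_cons, WR_cons] at h
    rw [WR_cons]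
    refine ⟨?_, ?_⟩
    · intro f hf
      rw [Ideal.mem_comap, map_mul] at hf
      exact h.1 _ hf
    · have := ih _ h.2
      convert this using 1
      ext f
      rw [mem_sup_span_one, Ideal.mem_comap, mem_sup_span_one]
      constructor
      · rintro ⟨g, hg⟩
        refine ⟨φ g, ?_⟩
        rw [Ideal.mem_comap, map_sub, map_mul] at hg
        exact hg
      · rintro ⟨g, hg⟩
        obtain ⟨g, rfl⟩ := hφ g
        refine ⟨g, ?_⟩
        rw [Ideal.mem_comap, map_sub, map_mul]
        exact hg

/-! ### Lifting regularity along `t` -/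

/-- If `Q` is homogeneous with respect to the grading encoded by `Ψ : R → R[z]`, in which
`t` has degree one, then regularity modulo `(Q, t)` lifts to regularity modulo `Q`. -/
theorem WR_lift {R : Type*} [CommRing R] (t : R) (Ψ : R →+* Polynomial R)
    (hev : ∀ f, Polynomial.eval 1 (Ψ f) = f)
    (hΨt : Ψ t = Polynomial.C t * Polynomial.X) (L : List R)
    (hL : ∀ e ∈ L, ∃ d : ℕ, Ψ e = Polynomial.C e * Polynomial.X ^ d) :
    ∀ (Q : Ideal R), (∀ q ∈ Q, Ψ q ∈ Q.map Polynomial.C) → (∀ f, t * f ∈ Q → f ∈ Q) →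
      WR L (Q ⊔ Ideal.span {t}) → WR L Q := by
  induction L with
  | nil => intro Q _ _ _; exact WR_nil _
  | cons e l ih =>
    intro Q hQ ht h
    rw [WR_cons] at h ⊢
    obtain ⟨h1, h2⟩ := h
    refine ⟨?_, ih (fun e' he' => hL e' (by simp [he'])) _ ?_ ?_ ?_⟩
    · intro f hf
      have key : ∀ m : ℕ, ∃ g, f - t ^ m * g ∈ Q ∧ e * g ∈ Q := by
        intro m
        induction m with
        | zero => exact ⟨f, by simp, hf⟩
        | succ m ihm =>
          obtain ⟨g, hg, heg⟩ := ihm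
          obtain ⟨g', hg'⟩ := mem_sup_span_one.1 (h1 g (Ideal.mem_sup_left heg))
          refine ⟨g', ?_, ht _ ?_⟩
          · convert Q.add_mem hg (Q.mul_mem_left (t ^ m) hg') using 1; ring
          · convert Q.sub_mem heg (Q.mul_mem_left e hg') using 1; ring
      obtain ⟨g, hg, -⟩ := key ((Ψ f).natDegree + 1)
      have h3 := hQ _ hg
      rw [Ideal.mem_map_C_iff] at h3
      rw [← hev f, Polynomial.eval_eq_sum_range]
      refine Ideal.sum_mem _ fun d hd => ?_
      have h4 := h3 d
      rw [map_sub, map_mul, map_pow, hΨt, mul_pow, Polynomial.coeff_sub] at h4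
      have h5 : ((Polynomial.C t ^ ((Ψ f).natDegree + 1) *
          Polynomial.X ^ ((Ψ f).natDegree + 1)) * Ψ g).coeff d = 0 := by
        rw [mul_right_comm, Polynomial.coeff_mul_X_pow', if_neg]
        simp at hd; omega
      rw [h5, sub_zero] at h4
      simpa using h4
    · intro q hq
      obtain ⟨g, hg⟩ := mem_sup_span_one.1 hq
      have h3 := hQ _ hg
      obtain ⟨d, hd⟩ := hL e (by simp)
      have : Ψ q = Ψ (q - e * g) + Polynomial.C e * (Polynomial.X ^ d * Ψ g) := by
        rw [map_sub, map_mul, hd]; ring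
      rw [this]
      refine Ideal.add_mem _ (Ideal.map_mono le_sup_left h3) (Ideal.mul_mem_right _ _ ?_)
      exact Ideal.mem_map_of_mem _ (Ideal.mem_sup_right (Ideal.mem_span_singleton_self e))
    · intro f hf
      obtain ⟨g, hg⟩ := mem_sup_span_one.1 hf
      have : g ∈ Q ⊔ Ideal.span {t} := by
        apply h1
        rw [mem_sup_span_one]
        refine ⟨f, ?_⟩
        convert Q.neg_mem hg using 1; ring
      obtain ⟨g', hg'⟩ := mem_sup_span_one.1 this
      rw [mem_sup_span_one]
      refine ⟨g', ht _ ?_⟩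
      convert Q.add_mem hg (Q.mul_mem_left e hg') using 1; ring
    · rw [sup_right_comm]; exact h2

/-! ### Differences of variables modulo variables -/

open Classical in
theorem WR_vars {σ K : Type*} [Field K] (Z : Set σ) (w : σ → σ) (ys : List σ)
    (hnd : ys.Nodup) (hw : ∀ y ∈ ys, w y ∉ ys) (hZ : ∀ y ∈ ys, y ∈ Z → w y ∉ Z)
    (hinj : ∀ y ∈ ys, ∀ y' ∈ ys, y ∈ Z → y' ∈ Z → w y = w y' → y = y') :
    WR (ys.map fun y => (X y - X (w y) : MvPolynomial σ K))
      (Ideal.span ((fun s => X s) '' Z)) := by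
  intro l₁ e l₂ hl f hf
  obtain ⟨p₁, p₂', rfl, rfl, hp⟩ := List.map_eq_append_iff.1 hl
  obtain ⟨y, p₂, rfl, rfl, rfl⟩ := List.map_eq_cons_iff.1 hp
  set I : Ideal (MvPolynomial σ K) := Ideal.span ((fun s => X s) '' Z) ⊔
    Ideal.span {a | a ∈ p₁.map fun y => (X y - X (w y) : MvPolynomial σ K)} with hI
  have hyp : y ∉ p₁ := by
    intro h
    have := (List.nodup_append.1 hnd).2.2 y h y (by simp)
    exact this rfl
  have hp1 : ∀ z ∈ p₁, z ∈ p₁ ++ y :: p₂ := fun z hz => by simp [hz]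
  have hyin : y ∈ p₁ ++ y :: p₂ := by simp
  let Z' : Set σ := Z ∪ {s | ∃ z ∈ p₁, z ∈ Z ∧ w z = s}
  have hysZ' : ∀ z ∈ p₁ ++ y :: p₂, z ∈ Z' → z ∈ Z := by
    rintro z hz (h | ⟨z', hz', -, rfl⟩)
    · exact h
    · exact absurd hz (hw z' (hp1 _ hz'))
  let φ₀ : σ → MvPolynomial σ K := fun s =>
    if s ∈ Z' then 0 else if s ∈ p₁ then (if w s ∈ Z' then 0 else X (w s)) else X s
  let φ : MvPolynomial σ K →ₐ[K] MvPolynomial σ K := aeval φ₀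
  have hE : ∀ z ∈ p₁, (X z - X (w z) : MvPolynomial σ K) ∈ I := fun z hz =>
    Ideal.mem_sup_right (Ideal.subset_span (List.mem_map.2 ⟨z, hz, rfl⟩))
  have hXZ : ∀ s ∈ Z, (X s : MvPolynomial σ K) ∈ I := fun s hs =>
    Ideal.mem_sup_left (Ideal.subset_span ⟨s, hs, rfl⟩)
  have hXZ' : ∀ s ∈ Z', (X s : MvPolynomial σ K) ∈ I := by
    rintro s (h | ⟨z, hz, hzZ, rfl⟩)
    · exact hXZ s h
    · convert I.sub_mem (hXZ z hzZ) (hE z hz) using 1; ring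
  have hXφ : ∀ s, X s - φ₀ s ∈ I := by
    intro s
    simp only [φ₀]
    split_ifs with h1 h2 h3
    · simpa using hXZ' s h1
    · convert I.add_mem (hE s h2) (hXZ' _ h3) using 1; ring
    · exact hE s h2
    · simp
  have hfφ : ∀ f, f - φ f ∈ I := by
    intro f
    have : (Ideal.Quotient.mkₐ K I).comp φ = Ideal.Quotient.mkₐ K I := by
      ext s
      simp only [AlgHom.comp_apply, φ, aeval_X, Ideal.Quotient.mkₐ_eq_mk]
      exact ((Ideal.Quotient.mk_eq_mk_iff_sub_mem _ _).2 (hXφ s)).symm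
    rw [← Ideal.Quotient.mk_eq_mk_iff_sub_mem]
    exact (DFunLike.congr_fun this f).symm
  have hIker : I ≤ RingHom.ker φ := by
    rw [hI, sup_le_iff, Ideal.span_le, Ideal.span_le]
    refine ⟨?_, ?_⟩
    · rintro _ ⟨s, hs, rfl⟩
      have : s ∈ Z' := Or.inl hs
      simp [φ, φ₀, this]
    · intro a ha
      obtain ⟨z, hz, rfl⟩ := List.mem_map.1 ha
      have h1 : w z ∉ p₁ := fun h => hw z (hp1 z hz) (hp1 _ h)
      simp only [SetLike.mem_coe, RingHom.mem_ker, map_sub, φ, aeval_X, φ₀]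
      by_cases hzZ : z ∈ Z'
      · have h2 : w z ∈ Z' := Or.inr ⟨z, hz, hysZ' z (hp1 z hz) hzZ, rfl⟩
        simp [hzZ, h2]
      · simp [hzZ, h1, hz]
  have hne : φ (X y - X (w y)) ≠ 0 := by
    have h1 : w y ∉ p₁ := fun h => hw y hyin (hp1 _ h)
    have h0 : w y ≠ y := fun h => hw y hyin (by rw [h]; exact hyin)
    simp only [map_sub, φ, aeval_X, φ₀]
    by_cases hyZ : y ∈ Z'
    · have hyZ0 := hysZ' y hyin hyZ
      have h2 : w y ∉ Z' := by
        rintro (h | ⟨z, hz, hzZ, h⟩)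
        · exact hZ y hyin hyZ0 h
        · have := hinj z (hp1 z hz) y hyin hzZ hyZ0 h
          exact hyp (this ▸ hz)
      simp [hyZ, h1, h2]
    · by_cases h2 : w y ∈ Z'
      · simp [hyZ, hyp, h2]
      · simp only [hyZ, hyp, h1, h2, if_false]
        rw [sub_ne_zero]
        exact fun h => h0 (X_injective h).symm
  have h1 := hIker hf
  rw [RingHom.mem_ker, map_mul] at h1
  have h2 := (mul_eq_zero.1 h1).resolve_left hne
  have h3 := hfφ f
  rwa [h2, sub_zero] at h3

/-! ### The monomial ideal -/

def Zset {σ : Type*} {n : ℕ} (a b : Fin n → σ) (p : Fin n) : Set σ :=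
  {s | (∃ c, c < p ∧ b c = s) ∨ ∃ c, p < c ∧ a c = s}

def Eset {σ : Type*} {n : ℕ} (a b : Fin n → σ) (m : ℕ) : Set (σ →₀ ℕ) :=
  {s | (∃ c c' : Fin n, c < c' ∧ (c' : ℕ) < m ∧
      Finsupp.single (b c) 1 + Finsupp.single (a c') 1 = s) ∨
    ∃ c : Fin n, m ≤ (c : ℕ) ∧ Finsupp.single (a c) 1 = s}

def Dideal {σ : Type*} (K : Type*) [Field K] {n : ℕ} (a b : Fin n → σ) (m : ℕ) :
    Ideal (MvPolynomial σ K) :=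
  Ideal.span ((fun s => monomial s (1 : K)) '' Eset a b m)

theorem Dideal_succ {σ K : Type*} [Field K] {n : ℕ} (a b : Fin n → σ) (m : Fin n) :
    Dideal K a b (m + 1) ⊔ Ideal.span {X (a m)} = Dideal K a b m := by
  apply le_antisymm
  · rw [sup_le_iff, Dideal, Ideal.span_le, Ideal.span_le]
    refine ⟨?_, ?_⟩
    · rintro _ ⟨s, hs, rfl⟩
      rcases hs with ⟨c, c', hc, hc', rfl⟩ | ⟨c, hc, rfl⟩
      · rcases Nat.lt_succ_iff_lt_or_eq.1 hc' with h | h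
        · exact Ideal.subset_span ⟨_, Or.inl ⟨c, c', hc, h, rfl⟩, rfl⟩
        · have : (monomial (Finsupp.single (b c) 1 + Finsupp.single (a c') 1) (1 : K)) =
            X (b c) * monomial (Finsupp.single (a c') 1) (1 : K) := by
            rw [X, monomial_mul, one_mul]
          simp only [this]
          refine Ideal.mul_mem_left _ _ ?_
          exact Ideal.subset_span ⟨_, Or.inr ⟨c', h.ge, rfl⟩, rfl⟩
      · exact Ideal.subset_span ⟨_, Or.inr ⟨c, by omega, rfl⟩, rfl⟩
    · rintro _ rfl
      exact Ideal.subset_span ⟨_, Or.inr ⟨m, le_rfl, rfl⟩, rfl⟩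
  · rw [Dideal, Ideal.span_le]
    rintro _ ⟨s, hs, rfl⟩
    rcases hs with ⟨c, c', hc, hc', rfl⟩ | ⟨c, hc, rfl⟩
    · exact Ideal.mem_sup_left
        (Ideal.subset_span ⟨_, Or.inl ⟨c, c', hc, by omega, rfl⟩, rfl⟩)
    · rcases hc.lt_or_eq with h | h
      · exact Ideal.mem_sup_left (Ideal.subset_span ⟨_, Or.inr ⟨c, h, rfl⟩, rfl⟩)
      · have : m = c := Fin.ext h
        subst this
        exact Ideal.mem_sup_right (Ideal.subset_span rfl)

theorem Dideal_colon {σ K : Type*} [Field K] {n : ℕ} (a b : Fin n → σ)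
    (ha : Function.Injective a)
    (hab : ∀ c m : Fin n, (c : ℕ) + 1 < m → a m ≠ b c) (m : Fin n)
    (f : MvPolynomial σ K) :
    X (a m) * f ∈ Dideal K a b (m + 1) ↔ f ∈ Ideal.span ((fun s => X s) '' Zset a b m) := by
  constructor
  · intro h
    have h' : f ∈ Ideal.span (X '' Zset a b m) := by
      rw [mem_ideal_span_X_image]
      intro u hu
      rw [Dideal, mem_ideal_span_monomial_image] at h
      obtain ⟨s, hs, hle⟩ := h (Finsupp.single (a m) 1 + u) (by
        rw [mem_support_iff, coeff_X_mul]; exact mem_support_iff.1 hu)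
      rcases hs with ⟨c, c', hc, hc', rfl⟩ | ⟨c, hc, rfl⟩
      · have hcm : c < m := by
          have h1 : (c : ℕ) < c' := hc
          have : (c : ℕ) < m := by omega
          exact this
        refine ⟨b c, Or.inl ⟨c, hcm, rfl⟩, ?_⟩
        have h1 := hle (b c)
        rcases Nat.lt_succ_iff_lt_or_eq.1 hc' with h | h
        · have h2 : a m ≠ b c := hab c m (by
            have h1 : (c : ℕ) < c' := hc
            omega)
          simp [h2] at h1
          omega
        · have : c' = m := Fin.ext h
          subst this
          simp at h1
          omega
      · have hmc : m < c := by
          have : (m : ℕ) < c := by omega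
          exact this
        refine ⟨a c, Or.inr ⟨c, hmc, rfl⟩, ?_⟩
        have h1 := hle (a c)
        have h2 : a m ≠ a c := fun h => hmc.ne (ha h)
        simp [h2] at h1
        omega
    exact h'
  · intro h
    have : Ideal.span ((fun s => X s) '' Zset a b m) ≤
        Submodule.comap (LinearMap.mulLeft (MvPolynomial σ K) (X (a m))) (Dideal K a b (m + 1)) := by
      rw [Ideal.span_le]
      rintro _ ⟨s, hs, rfl⟩
      change X (a m) * X s ∈ Dideal K a b (m + 1)
      rcases hs with ⟨c, hc, rfl⟩ | ⟨c, hc, rfl⟩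
      · refine Ideal.subset_span ⟨_, Or.inl ⟨c, m, hc, Nat.lt_succ_self _, rfl⟩, ?_⟩
        simp only [X, monomial_mul, one_mul]
        rw [add_comm]
      · refine Ideal.mul_mem_left _ _ (Ideal.subset_span ⟨_, Or.inr ⟨c, hc, rfl⟩, rfl⟩)
    exact this h

theorem WR_Dideal {σ K : Type*} [Field K] {n : ℕ} (hn : 0 < n) (a b : Fin n → σ)
    (ha : Function.Injective a)
    (hab : ∀ c m : Fin n, (c : ℕ) + 1 < m → a m ≠ b c) (L : List (MvPolynomial σ K))
    (hL : ∀ p, WR L (Ideal.span ((fun s => X s) '' Zset a b p))) :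
    ∀ m : ℕ, m < n → WR L (Dideal K a b (m + 1)) := by
  intro m
  induction m with
  | zero =>
    intro _
    have : Dideal K a b (0 + 1) = Ideal.span ((fun s => X s) '' Zset a b ⟨0, hn⟩) := by
      rw [Dideal]
      congr 1
      ext f
      constructor
      · rintro ⟨_, ⟨c, c', hc, hc', rfl⟩ | ⟨c, hc, rfl⟩, rfl⟩
        · have h1 : (c : ℕ) < c' := hc
          omega
        · refine ⟨a c, Or.inr ⟨c, ?_, rfl⟩, rfl⟩
          exact Fin.mk_lt_of_lt_val hc
      · rintro ⟨_, ⟨c, hc, rfl⟩ | ⟨c, hc, rfl⟩, rfl⟩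
        · have h1 : (c : ℕ) < 0 := hc
          omega
        · exact ⟨_, Or.inr ⟨c, hc, rfl⟩, rfl⟩
    rw [this]
    exact hL _
  | succ m ih =>
    intro hm
    refine WR_ses (X (a ⟨m + 1, hm⟩)) L _ _ (Dideal_colon a b ha hab ⟨m + 1, hm⟩) (hL _) ?_
    have := Dideal_succ (K := K) a b ⟨m + 1, hm⟩
    simp only at this
    rw [this]
    exact ih (by omega)

/-! ### Homogenization -/

section Homog

theorem mem_map_C_aux {R : Type*} [CommRing R] (Q : Ideal R) (g : R) (d : ℕ) (hg : g ∈ Q) :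
    Polynomial.C g * Polynomial.X ^ d ∈ Q.map Polynomial.C :=
  Ideal.mul_mem_right _ _ (Ideal.mem_map_of_mem _ hg)

theorem C_sub_aux {R : Type*} [CommRing R] (f g : R) (d : ℕ) :
    Polynomial.C f * Polynomial.X ^ d - Polynomial.C g * Polynomial.X ^ d =
      Polynomial.C (f - g) * Polynomial.X ^ d := by
  rw [map_sub, sub_mul]

variable {σ : Type*} [Fintype σ] {K : Type*} [Field K] (lam : σ → ℕ)

/-- `X_s ↦ X_s z^{λ_s}`. -/
def rhoH : MvPolynomial σ K →+* Polynomial (MvPolynomial σ K) :=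
  eval₂Hom (Polynomial.C.comp MvPolynomial.C) (fun s => Polynomial.C (X s) * Polynomial.X ^ lam s)

theorem rhoH_monomial (u : σ →₀ ℕ) (c : K) :
    rhoH lam (monomial u c) = Polynomial.C (monomial u c) * Polynomial.X ^ wdegS σ lam u := by
  rw [rhoH, coe_eval₂Hom, eval₂_monomial, Finsupp.prod_fintype _ _ (by simp)]
  simp only [mul_pow, Finset.prod_mul_distrib, ← pow_mul, Finset.prod_pow_eq_pow_sum, wdegS]
  rw [← mul_assoc]
  congr 1
  rw [monomial_eq, Finsupp.prod_fintype _ _ (by simp)]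
  simp [map_mul, map_prod, map_pow]

/-- `X_s ↦ X_s z^{λ_s}`, `t ↦ z`. -/
def thetaH : Polynomial (MvPolynomial σ K) →+* Polynomial (MvPolynomial σ K) :=
  Polynomial.eval₂RingHom (rhoH lam) Polynomial.X

/-- `X_s ↦ X_s z^{λ_s}`, `t ↦ t z`. -/
def psiH : Polynomial (MvPolynomial σ K) →+* Polynomial (Polynomial (MvPolynomial σ K)) :=
  Polynomial.eval₂RingHom ((Polynomial.mapRingHom
      (Polynomial.C : MvPolynomial σ K →+* Polynomial (MvPolynomial σ K))).comp (rhoH lam))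
    (Polynomial.C (Polynomial.X : Polynomial (MvPolynomial σ K)) * Polynomial.X)

theorem psiH_ev (f : Polynomial (MvPolynomial σ K)) : Polynomial.eval 1 (psiH lam f) = f := by
  have : (Polynomial.evalRingHom 1).comp (psiH lam) =
      RingHom.id (Polynomial (MvPolynomial σ K)) := by
    ext s <;> simp [psiH, rhoH]
  exact DFunLike.congr_fun this f

theorem psiH_homog (g : MvPolynomial σ K) : ∃ d, psiH lam (homogPoly σ K lam g) =
    Polynomial.C (homogPoly σ K lam g) * Polynomial.X ^ d := by
  refine ⟨g.support.sup (wdegS σ lam), ?_⟩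
  rw [homogPoly, map_sum, map_sum, Finset.sum_mul]
  refine Finset.sum_congr rfl fun u hu => ?_
  have hle : wdegS σ lam u ≤ g.support.sup (wdegS σ lam) := Finset.le_sup hu
  simp only [map_mul, map_pow, psiH, Polynomial.coe_eval₂RingHom, Polynomial.eval₂_C,
    Polynomial.eval₂_X, RingHom.comp_apply, rhoH_monomial, Polynomial.coe_mapRingHom,
    Polynomial.map_C, Polynomial.map_X]
  conv_rhs => rw [← Nat.add_sub_of_le hle, pow_add]
  rw [Nat.add_sub_of_le hle]
  ring

theorem thetaH_homog (g : MvPolynomial σ K) : ∃ d, thetaH lam (homogPoly σ K lam g) =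
    Polynomial.C g * Polynomial.X ^ d := by
  refine ⟨g.support.sup (wdegS σ lam), ?_⟩
  rw [homogPoly, map_sum]
  conv_rhs => rw [g.as_sum]
  rw [map_sum, Finset.sum_mul, ← g.as_sum]
  refine Finset.sum_congr rfl fun u hu => ?_
  have hle : wdegS σ lam u ≤ g.support.sup (wdegS σ lam) := Finset.le_sup hu
  simp only [map_mul, map_pow, thetaH, Polynomial.coe_eval₂RingHom, Polynomial.eval₂_C,
    Polynomial.eval₂_X, rhoH_monomial]
  rw [mul_assoc, ← pow_add, Nat.add_sub_of_le hle]

theorem thetaH_coeff (F : Polynomial (MvPolynomial σ K)) (d : ℕ) (u : σ →₀ ℕ) :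
    coeff u ((thetaH lam F).coeff d) =
      if wdegS σ lam u ≤ d then coeff u (F.coeff (d - wdegS σ lam u)) else 0 := by
  classical
  induction F using Polynomial.induction_on' with
  | add p q hp hq =>
    rw [map_add, Polynomial.coeff_add, coeff_add, hp, hq, Polynomial.coeff_add, coeff_add]
    split_ifs <;> simp
  | monomial j p =>
    induction p using MvPolynomial.induction_on' with
    | add p q hp hq =>
      rw [map_add, map_add, Polynomial.coeff_add, coeff_add, hp, hq, Polynomial.coeff_add,
        coeff_add]
      split_ifs <;> simp
    | monomial v c =>
      rw [← Polynomial.C_mul_X_pow_eq_monomial]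
      simp only [map_mul, map_pow, thetaH, Polynomial.coe_eval₂RingHom, Polynomial.eval₂_C,
        Polynomial.eval₂_X, rhoH_monomial]
      rw [mul_assoc, ← pow_add, Polynomial.coeff_C_mul_X_pow, Polynomial.coeff_C_mul_X_pow]
      by_cases h : v = u
      · subst h
        by_cases h1 : d = wdegS σ lam v + j
        · rw [if_pos h1, if_pos (by omega), if_pos (by omega)]
        · rw [if_neg h1]
          split_ifs with h2 h3
          · omega
          · simp
          · simp
      · split_ifs <;> simp [coeff_monomial, h]

theorem mem_homogIdeal_iff (I : Ideal (MvPolynomial σ K)) (F : Polynomial (MvPolynomial σ K)) :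
    F ∈ homogIdeal σ K lam I ↔ thetaH lam F ∈ I.map Polynomial.C := by
  classical
  constructor
  · intro hF
    have : homogIdeal σ K lam I ≤ (I.map Polynomial.C).comap (thetaH lam) := by
      rw [homogIdeal, Ideal.span_le]
      rintro _ ⟨g, hg, rfl⟩
      obtain ⟨d, hd⟩ := thetaH_homog lam g
      rw [SetLike.mem_coe, Ideal.mem_comap]
      rw [hd]
      exact Ideal.mul_mem_right _ _ (Ideal.mem_map_of_mem _ hg)
    exact this hF
  · intro hF
    rw [Ideal.mem_map_C_iff] at hF
    let hom : ℕ → MvPolynomial σ K → Polynomial (MvPolynomial σ K) := fun d g =>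
      ∑ u ∈ g.support, Polynomial.C (monomial u (coeff u g)) *
        Polynomial.X ^ (d - wdegS σ lam u)
    have hhomc : ∀ d g j u, coeff u ((hom d g).coeff j) =
        if j = d - wdegS σ lam u then coeff u g else 0 := by
      intro d g j u
      simp only [hom, Polynomial.finsetSum_coeff, Polynomial.coeff_C_mul_X_pow, coeff_sum]
      have : ∀ v ∈ g.support, coeff u (if j = d - wdegS σ lam v then monomial v (coeff v g) else 0)
          = if v = u then (if j = d - wdegS σ lam u then coeff u g else 0) else 0 := by
        intro v _
        by_cases h : v = u
        · subst h
          rw [if_pos rfl]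
          split_ifs <;> simp
        · split_ifs <;> simp [coeff_monomial, h]
      rw [Finset.sum_congr rfl this, Finset.sum_ite_eq']
      split_ifs with h1 h2
      · rfl
      · rfl
      · exact (notMem_support_iff.1 h1).symm
      · rfl
    have hmem : ∀ d, hom d ((thetaH lam F).coeff d) ∈ homogIdeal σ K lam I := by
      intro d
      set g := (thetaH lam F).coeff d with hg
      have hsup : g.support.sup (wdegS σ lam) ≤ d := by
        refine Finset.sup_le fun u hu => ?_
        rw [mem_support_iff, hg, thetaH_coeff] at hu
        by_contra h
        rw [if_neg h] at hu
        exact hu rfl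
      have : hom d g = Polynomial.X ^ (d - g.support.sup (wdegS σ lam)) *
          homogPoly σ K lam g := by
        rw [homogPoly, Finset.mul_sum]
        refine Finset.sum_congr rfl fun u hu => ?_
        have hle : wdegS σ lam u ≤ g.support.sup (wdegS σ lam) := Finset.le_sup hu
        rw [mul_left_comm, ← pow_add]
        congr 2
        omega
      rw [this]
      exact Ideal.mul_mem_left _ _ (Ideal.subset_span ⟨g, hF d, rfl⟩)
    have hsum : F = ∑ d ∈ Finset.range ((thetaH lam F).natDegree + 1),
        hom d ((thetaH lam F).coeff d) := by
      ext j u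
      simp only [Polynomial.finsetSum_coeff, coeff_sum, hhomc, thetaH_coeff]
      have : ∀ d ∈ Finset.range ((thetaH lam F).natDegree + 1),
          (if j = d - wdegS σ lam u then
            if wdegS σ lam u ≤ d then coeff u (F.coeff (d - wdegS σ lam u)) else 0 else 0) =
          if d = j + wdegS σ lam u then coeff u (F.coeff j) else 0 := by
        intro d _
        by_cases h1 : d = j + wdegS σ lam u
        · subst h1
          simp
        · rw [if_neg h1]
          split_ifs with h2 h3
          · omega
          · rfl
          · rfl
      rw [Finset.sum_congr rfl this, Finset.sum_ite_eq']
      split_ifs with h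
      · rfl
      · have h1 := thetaH_coeff lam F (j + wdegS σ lam u) u
        rw [Polynomial.coeff_eq_zero_of_natDegree_lt (by simpa using h), if_pos (by omega)] at h1
        simpa using h1.symm
    rw [hsum]
    exact Ideal.sum_mem _ fun d _ => hmem d

theorem homogIdeal_t (I : Ideal (MvPolynomial σ K)) (f : Polynomial (MvPolynomial σ K))
    (hf : Polynomial.X * f ∈ homogIdeal σ K lam I) : f ∈ homogIdeal σ K lam I := by
  rw [mem_homogIdeal_iff] at hf ⊢
  have : thetaH lam (Polynomial.X : Polynomial (MvPolynomial σ K)) = Polynomial.X := by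
    simp [thetaH]
  rw [map_mul, this, Ideal.mem_map_C_iff] at hf
  rw [Ideal.mem_map_C_iff]
  intro d
  have := hf (d + 1)
  rwa [Polynomial.coeff_X_mul] at this

theorem homogIdeal_psi (I : Ideal (MvPolynomial σ K)) (q : Polynomial (MvPolynomial σ K))
    (hq : q ∈ homogIdeal σ K lam I) :
    psiH lam q ∈ (homogIdeal σ K lam I).map Polynomial.C := by
  have : homogIdeal σ K lam I ≤ ((homogIdeal σ K lam I).map Polynomial.C).comap (psiH lam) := by
    conv_lhs => rw [homogIdeal]
    rw [Ideal.span_le]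
    rintro _ ⟨g, hg, rfl⟩
    obtain ⟨d, hd⟩ := psiH_homog lam g
    rw [SetLike.mem_coe, Ideal.mem_comap]
    rw [hd]
    exact mem_map_C_aux _ _ _ (Ideal.subset_span ⟨g, hg, rfl⟩)
  exact this hq

theorem homogPoly_zero (g : MvPolynomial σ K) :
    (homogPoly σ K lam g).coeff 0 = initFormS σ K lam g := by
  classical
  rw [homogPoly, initFormS, Polynomial.finsetSum_coeff, Finset.sum_filter]
  refine Finset.sum_congr rfl fun u hu => ?_
  have hle : wdegS σ lam u ≤ g.support.sup (wdegS σ lam) := Finset.le_sup hu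
  rw [Polynomial.coeff_C_mul_X_pow]
  by_cases h : wdegS σ lam u = g.support.sup (wdegS σ lam)
  · rw [if_pos (by omega), if_pos h]
  · rw [if_neg (by omega), if_neg h]

theorem homogIdeal_sup_t (I : Ideal (MvPolynomial σ K)) :
    homogIdeal σ K lam I ⊔ Ideal.span {Polynomial.X} =
      (initIdealS σ K lam I).comap Polynomial.constantCoeff := by
  apply le_antisymm
  · rw [sup_le_iff, homogIdeal, Ideal.span_le, Ideal.span_le]
    refine ⟨?_, ?_⟩
    · rintro _ ⟨g, hg, rfl⟩
      rw [SetLike.mem_coe, Ideal.mem_comap]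
      rw [Polynomial.constantCoeff_apply, homogPoly_zero]
      by_cases h : g = 0
      · subst h
        simp [initFormS]
      · exact Ideal.subset_span ⟨g, hg, h, rfl⟩
    · rintro _ rfl
      simp
  · intro f hf
    have hC : initIdealS σ K lam I ≤
        (homogIdeal σ K lam I ⊔ Ideal.span {Polynomial.X}).comap Polynomial.C := by
      rw [initIdealS, Ideal.span_le]
      rintro _ ⟨g, hg, -, rfl⟩
      rw [SetLike.mem_coe, Ideal.mem_comap]
      have h1 : Polynomial.X ∣ homogPoly σ K lam g - Polynomial.C (initFormS σ K lam g) := by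
        rw [Polynomial.X_dvd_iff]
        simp [homogPoly_zero]
      obtain ⟨q, hq⟩ := h1
      rw [mem_sup_span_one]
      refine ⟨-q, ?_⟩
      have : Polynomial.C (initFormS σ K lam g) - Polynomial.X * -q = homogPoly σ K lam g := by
        linear_combination -hq
      rw [this]
      exact Ideal.subset_span ⟨g, hg, rfl⟩
    have h1 := hC hf
    rw [Ideal.mem_comap, Polynomial.constantCoeff_apply] at h1
    have h2 : f - Polynomial.C (f.coeff 0) ∈ homogIdeal σ K lam I ⊔ Ideal.span {Polynomial.X} := by
      refine Ideal.mem_sup_right (Ideal.mem_span_singleton.2 ?_)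
      rw [Polynomial.X_dvd_iff]
      simp
    simpa using Ideal.add_mem _ h2 h1

theorem psiH_diff (s s' : σ) (h : lam s = lam s') :
    ∃ d : ℕ, psiH lam (Polynomial.C (X s - X s' : MvPolynomial σ K)) =
      Polynomial.C (Polynomial.C (X s - X s')) * Polynomial.X ^ d := by
  refine ⟨lam s, ?_⟩
  have h1 : ∀ v, psiH lam (Polynomial.C (X v : MvPolynomial σ K)) =
      Polynomial.C (Polynomial.C (X v)) * Polynomial.X ^ lam v := by
    intro v
    simp [psiH, rhoH]
  rw [map_sub, map_sub, h1, h1, h]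
  exact C_sub_aux _ _ _

/-- The general criterion. -/
theorem regSeq_of_WR (I M : Ideal (MvPolynomial σ K)) (hI : initIdealS σ K lam I = M)
    (hM : M ≤ RingHom.ker (constantCoeff : MvPolynomial σ K →+* K))
    (ys : List σ) (w : σ → σ) (hlam : ∀ y ∈ ys, lam y = lam (w y))
    (hWR : WR (ys.map fun y => (X y - X (w y) : MvPolynomial σ K)) M) :
    IsRegSeqOnQuot (Polynomial (MvPolynomial σ K))
      ((ys.map fun y => (X y - X (w y) : MvPolynomial σ K)).map (fun a => Polynomial.C a))
      (homogIdeal σ K lam I) := by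
  set As := ys.map fun y => (X y - X (w y) : MvPolynomial σ K) with hAs
  have h1 : WR (As.map (fun a => Polynomial.C a)) (homogIdeal σ K lam I) := by
    refine WR_lift Polynomial.X (psiH lam) (psiH_ev lam) (by simp [psiH]) _ ?_ _
      (homogIdeal_psi lam I) (homogIdeal_t lam I) ?_
    · intro e he
      simp only [hAs, List.map_map, List.mem_map] at he
      obtain ⟨y, hy, rfl⟩ := he
      exact psiH_diff lam y (w y) (hlam y hy)
    · rw [homogIdeal_sup_t, hI]
      apply WR_comap
      · exact fun p => ⟨Polynomial.C p, by simp⟩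
      · rw [List.map_map]
        convert hWR using 1
        conv_rhs => rw [← List.map_id As]
        congr 1
        funext a
        simp
  refine ⟨?_, ?_⟩
  · intro j hj f hf
    refine h1 _ _ (List.drop (j + 1) (As.map (fun a => Polynomial.C a))) ?_ f hf
    rw [List.get_eq_getElem, List.cons_getElem_drop_succ, List.take_append_drop]
  · intro htop
    have h2 : homogIdeal σ K lam I ⊔ Ideal.span {a | a ∈ As.map (fun a => Polynomial.C a)} ≤
        RingHom.ker ((constantCoeff : MvPolynomial σ K →+* K).comp Polynomial.constantCoeff) := by
      rw [sup_le_iff]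
      refine ⟨?_, ?_⟩
      · intro f hf
        have h3 : f ∈ homogIdeal σ K lam I ⊔ Ideal.span {Polynomial.X} := Ideal.mem_sup_left hf
        rw [homogIdeal_sup_t, hI] at h3
        exact hM h3
      · rw [Ideal.span_le]
        intro a ha
        simp only [hAs, List.map_map, List.mem_map, Set.mem_ofPred_eq] at ha
        obtain ⟨y, hy, rfl⟩ := ha
        simp [RingHom.mem_ker]
    rw [htop] at h2
    have h3 := h2 (Submodule.mem_top (x := 1))
    simp [RingHom.mem_ker] at h3

end Homog

/-- If `λ̃` is a weight vector on the variables of `S` making every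
element of `𝒜` homogeneous and satisfying `in_{λ̃}(I_{Π,M}) = M_{Π,M}`, then `𝒜` is a
regular sequence on `S[t]/I_{Π,M,t}`, where `I_{Π,M,t}` is the `λ̃`-homogenization of
`I_{Π,M}`. -/
theorem statement_14 (K : Type*) [Field K] (n k : ℕ) (hn : 2 ≤ n) (hk : 2 ≤ k)
    (i : ℕ → ℕ) (hi0 : i 0 = 1) (hik : i k = n + 1) (himono : ∀ r < k, i r < i (r + 1))
    (A : Matrix (Fin 2) (Fin n) (MvPolynomial (SVar n k) K))
    (hA1 : ∀ r t : ℕ, r < k → t < i (r + 1) - i r → ∀ c : Fin n, (c : ℕ) = i r - 1 + t →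
      A 1 c = if r = k - 1 ∧ t = i k - i (k - 1) - 1 then X (s1S n k)
              else X (xvS n k (i (r + 1) - 1 - t)))
    (hA0 : ∀ r t : ℕ, r < k → t < i (r + 1) - i r → ∀ c : Fin n, (c : ℕ) = i r - 1 + t →
      A 0 c = if t = 0 then (if r = 0 then X (s2S n k) else X (vvS n k (r - 1)))
              else X (xvS n k (i (r + 1) - t)))
    (Itop Mpark : Ideal (MvPolynomial (SVar n k) K))
    (hItop : Itop = Ideal.span { f | ∃ c₁ c₂ : Fin n, c₁ < c₂ ∧
      f = A 0 c₁ * A 1 c₂ - A 0 c₂ * A 1 c₁ })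
    (hMpark : Mpark = Ideal.span { f | ∃ c₁ c₂ : Fin n, c₁ < c₂ ∧ f = A 1 c₁ * A 0 c₂ })
    (As : List (MvPolynomial (SVar n k) K))
    (hAs : As = ((List.range (k - 1)).map fun j => X (vvS n k j) - X (xvS n k (i (j + 2))))
      ++ [X (s1S n k) - X (xvS n k (i (k - 1))), X (s2S n k) - X (xvS n k (i 1))])
    (lam : SVar n k → ℕ)
    (hlamv : ∀ j : ℕ, j < k - 1 → lam (vvS n k j) = lam (xvS n k (i (j + 2))))
    (hlams1 : lam (s1S n k) = lam (xvS n k (i (k - 1))))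
    (hlams2 : lam (s2S n k) = lam (xvS n k (i 1)))
    (hinit : initIdealS (SVar n k) K lam Itop = Mpark) :
    IsRegSeqOnQuot (Polynomial (MvPolynomial (SVar n k) K))
      (As.map (fun a => Polynomial.C a))
      (homogIdeal (SVar n k) K lam Itop) := by
  have hmono : ∀ s, s ≤ k → ∀ r, r ≤ s → i r ≤ i s := by
    intro s
    induction s with
    | zero => intro _ r hr; rw [Nat.le_zero.1 hr]
    | succ s ih =>
      intro hs r hr
      rcases Nat.lt_succ_iff_lt_or_eq.1 (Nat.lt_succ_of_le hr) with h | h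
      · exact (ih (by omega) r (by omega)).trans (himono s (by omega)).le
      · rw [h]
  have hpos : ∀ r, r ≤ k → 1 ≤ i r := fun r hr => hi0 ▸ hmono r hr 0 (Nat.zero_le _)
  have hle : ∀ r, r ≤ k → i r ≤ n + 1 := fun r hr => hik ▸ hmono k le_rfl r hr
  have hstep : ∀ r s, r < s → s ≤ k → i (r + 1) ≤ i s := fun r s h hs => hmono s hs (r + 1) h
  have hcol : ∀ c : Fin n, ∃ r t : ℕ, r < k ∧ t < i (r + 1) - i r ∧ (c : ℕ) = i r - 1 + t := by
    intro c
    have : ∀ m, m ≤ k → (c : ℕ) + 1 < i m → ∃ r, r < m ∧ i r ≤ c + 1 ∧ (c : ℕ) + 1 < i (r + 1) := by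
      intro m
      induction m with
      | zero => intro _ h; rw [hi0] at h; omega
      | succ m ih =>
        intro hm h
        by_cases h1 : i m ≤ c + 1
        · exact ⟨m, by omega, h1, h⟩
        · obtain ⟨r, hr, h2⟩ := ih (by omega) (by omega)
          exact ⟨r, by omega, h2⟩
    obtain ⟨r, hr, h1, h2⟩ := this k le_rfl (by have := c.2; omega)
    have := hpos r hr.le
    exact ⟨r, c + 1 - i r, hr, by omega, by omega⟩
  choose ro tu hro hto hc using hcol
  have hrole : ∀ c c' : Fin n, c < c' → ro c ≤ ro c' := by
    intro c c' h
    by_contra hlt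
    have h1 := hstep (ro c') (ro c) (by omega) (hro c).le
    have h2 : (c : ℕ) < c' := h
    have := hc c; have := hc c'; have := hto c; have := hto c'
    have := hpos _ (hro c).le; have := hpos _ (hro c').le
    omega
  -- variables are distinct
  have hx : ∀ j j', 1 ≤ j → j ≤ n + 1 → 1 ≤ j' → j' ≤ n + 1 →
      xvS n k j = xvS n k j' → j = j' := by
    intro j j' h1 h2 h3 h4 h
    simp only [xvS, Sum.inl.injEq, Fin.mk.injEq] at h
    rw [Nat.mod_eq_of_lt (by omega), Nat.mod_eq_of_lt (by omega)] at h
    omega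
  have hv : ∀ j, (h : j < k - 1) → vvS n k j = Sum.inr (Sum.inl ⟨j, h⟩) := fun j h => by
    simp [vvS, h]
  let a : Fin n → SVar n k := fun c =>
    if tu c = 0 then (if ro c = 0 then s2S n k else vvS n k (ro c - 1))
    else xvS n k (i (ro c + 1) - tu c)
  let b : Fin n → SVar n k := fun c =>
    if ro c = k - 1 ∧ tu c = i k - i (k - 1) - 1 then s1S n k
    else xvS n k (i (ro c + 1) - 1 - tu c)
  have hAa : ∀ c, A 0 c = X (a c) := by
    intro c
    rw [hA0 (ro c) (tu c) (hro c) (hto c) c (hc c)]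
    simp only [a]
    split_ifs <;> rfl
  have hAb : ∀ c, A 1 c = X (b c) := by
    intro c
    rw [hA1 (ro c) (tu c) (hro c) (hto c) c (hc c)]
    simp only [b]
    split_ifs <;> rfl
  have hacases : ∀ c, (tu c = 0 ∧ ro c = 0 ∧ a c = s2S n k) ∨
      (tu c = 0 ∧ ∃ h : ro c - 1 < k - 1, 0 < ro c ∧
        a c = Sum.inr (Sum.inl ⟨ro c - 1, h⟩)) ∨
      (0 < tu c ∧ a c = xvS n k (i (ro c + 1) - tu c)) := by
    intro c
    have := hro c
    by_cases h1 : tu c = 0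
    · by_cases h2 : ro c = 0
      · left; simp [a, h1, h2]
      · right; left
        have h3 : ro c - 1 < k - 1 := by omega
        refine ⟨h1, h3, by omega, ?_⟩
        rw [← hv _ h3]
        simp [a, h1, h2]
    · right; right
      exact ⟨by omega, by simp [a, h1]⟩
  have hbcases : ∀ c : Fin n, ((c : ℕ) + 1 = n ∧ b c = s1S n k) ∨
      b c = xvS n k (i (ro c + 1) - 1 - tu c) := by
    intro c
    by_cases h : ro c = k - 1 ∧ tu c = i k - i (k - 1) - 1
    · left
      refine ⟨?_, by simp [b, h]⟩
      have h1 := hc c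
      have h2 := hto c
      have h3 := hpos (k - 1) (by omega)
      have h4 : ro c + 1 = k := by omega
      rw [h4, h.1] at h2
      rw [h.1] at h1
      omega
    · right
      simp only [b, if_neg h]
  have hbx : ∀ c, ∀ j, xvS n k j = b c → 1 ≤ j → j ≤ n + 1 → j = i (ro c + 1) - 1 - tu c := by
    intro c j h h1 h2
    have := hpos _ (hro c).le; have := hle (ro c + 1) (hro c); have := hto c
    rcases hbcases c with ⟨-, h'⟩ | h'
    · rw [h'] at h; simp [xvS, s1S] at h
    · rw [h'] at h
      exact hx _ _ h1 h2 (by omega) (by omega) h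
  have hax : ∀ c, ∀ j, xvS n k j = a c → 1 ≤ j → j ≤ n + 1 →
      0 < tu c ∧ j = i (ro c + 1) - tu c := by
    intro c j h h1 h2
    have := hpos _ (hro c).le; have := hle (ro c + 1) (hro c); have := hto c
    rcases hacases c with ⟨-, -, h'⟩ | ⟨-, _, -, h'⟩ | ⟨h0, h'⟩
    · rw [h'] at h; simp [xvS, s2S] at h
    · rw [h'] at h; simp [xvS] at h
    · rw [h'] at h
      exact ⟨h0, hx _ _ h1 h2 (by omega) (by omega) h⟩
  have hint : ∀ r s x, r < k → s < k → i r ≤ x → x < i (r + 1) → i s ≤ x → x < i (s + 1) →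
      r = s := by
    intro r s x hr hs h1 h2 h3 h4
    rcases lt_trichotomy r s with h | h | h
    · have := hstep r s h hs.le; omega
    · exact h
    · have := hstep s r h hr.le; omega
  have hsame : ∀ c c', ro c = ro c' → tu c = tu c' → c = c' := by
    intro c c' h1 h2
    apply Fin.ext
    rw [hc c, hc c', h1, h2]
  have hainj : Function.Injective a := by
    intro c c' h
    rcases hacases c with ⟨h1, h2, h3⟩ | ⟨h1, h1', h2, h3⟩ | ⟨h1, h3⟩
    · rcases hacases c' with ⟨g1, g2, g3⟩ | ⟨g1, g1', g2, g3⟩ | ⟨g1, g3⟩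
      · exact hsame _ _ (by omega) (by omega)
      · rw [h3, g3] at h; simp [s2S] at h
      · rw [h3, g3] at h; simp [s2S, xvS] at h
    · rcases hacases c' with ⟨g1, g2, g3⟩ | ⟨g1, g1', g2, g3⟩ | ⟨g1, g3⟩
      · rw [h3, g3] at h; simp [s2S] at h
      · rw [h3, g3] at h
        simp only [Sum.inr.injEq, Sum.inl.injEq, Fin.mk.injEq] at h
        exact hsame _ _ (by omega) (by omega)
      · rw [h3, g3] at h; simp [xvS] at h
    · have := hpos _ (hro c).le; have := hle (ro c + 1) (hro c); have := hto c
      obtain ⟨h4, h5⟩ := hax c' (i (ro c + 1) - tu c) (by rw [← h, h3]) (by omega) (by omega)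
      have := hto c'
      have h6 := hint (ro c) (ro c') (i (ro c + 1) - tu c) (hro c) (hro c') (by omega) (by omega)
        (by omega) (by omega)
      refine hsame _ _ h6 ?_
      have e1 : i (ro c) = i (ro c') := by rw [h6]
      have e2 : i (ro c + 1) = i (ro c' + 1) := by rw [h6]
      omega
  have hab : ∀ c m : Fin n, (c : ℕ) + 1 < m → a m ≠ b c := by
    intro c m hcm h
    have := hpos _ (hro m).le; have := hle (ro m + 1) (hro m); have := hto m
    rcases hbcases c with ⟨h1, h'⟩ | h'
    · have := m.2; omega
    · have := hpos _ (hro c).le; have := hle (ro c + 1) (hro c); have := hto c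
      obtain ⟨h4, h5⟩ := hax m (i (ro c + 1) - 1 - tu c) (by rw [h, h']) (by omega) (by omega)
      have h6 := hint (ro c) (ro m) (i (ro c + 1) - 1 - tu c) (hro c) (hro m) (by omega) (by omega)
        (by omega) (by omega)
      have := hc c; have := hc m
      have e1 : i (ro c) = i (ro m) := by rw [h6]
      have e2 : i (ro c + 1) = i (ro m + 1) := by rw [h6]
      omega
  -- the specialization map
  let w : SVar n k → SVar n k := Sum.elim Sum.inl (Sum.elim (fun j => xvS n k (i (j + 2)))
    (fun e => if e = 0 then xvS n k (i (k - 1)) else xvS n k (i 1)))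
  let ys : List (SVar n k) := (List.range (k - 1)).map (vvS n k) ++ [s1S n k, s2S n k]
  have hwv : ∀ j, j < k - 1 → w (vvS n k j) = xvS n k (i (j + 2)) := by
    intro j hj; rw [hv j hj]; simp [w]
  have hw1 : w (s1S n k) = xvS n k (i (k - 1)) := by simp [w, s1S]
  have hw2 : w (s2S n k) = xvS n k (i 1) := by simp [w, s2S]
  have hys : ∀ y ∈ ys, (∃ j, j < k - 1 ∧ y = vvS n k j) ∨ y = s1S n k ∨ y = s2S n k := by
    intro y hy
    simp only [ys, List.mem_append, List.mem_map, List.mem_range, List.mem_cons,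
      List.not_mem_nil, or_false] at hy
    rcases hy with ⟨j, hj, rfl⟩ | h
    · exact Or.inl ⟨j, hj, rfl⟩
    · exact Or.inr h
  have hysx : ∀ j, xvS n k j ∉ ys := by
    intro j hj
    rcases hys _ hj with ⟨l, hl, h⟩ | h | h
    · rw [hv l hl] at h; simp [xvS] at h
    · simp [xvS, s1S] at h
    · simp [xvS, s2S] at h
  have hwx : ∀ y ∈ ys, ∃ j, w y = xvS n k j := by
    intro y hy
    rcases hys _ hy with ⟨l, hl, rfl⟩ | rfl | rfl
    · exact ⟨_, hwv l hl⟩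
    · exact ⟨_, hw1⟩
    · exact ⟨_, hw2⟩
  have hAs' : As = ys.map fun y => (X y - X (w y) : MvPolynomial (SVar n k) K) := by
    rw [hAs]
    simp only [ys, List.map_append, List.map_map, List.map_cons, List.map_nil, hw1, hw2]
    congr 1
    refine List.map_congr_left fun j hj => ?_
    simp only [Function.comp]
    rw [hwv j (List.mem_range.1 hj)]
  have hnd : ys.Nodup := by
    rw [List.nodup_append]
    refine ⟨?_, ?_, ?_⟩
    · refine List.Nodup.map_on ?_ List.nodup_range
      intro j hj j' hj' h
      rw [hv j (List.mem_range.1 hj), hv j' (List.mem_range.1 hj')] at h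
      simpa using h
    · simp [s1S, s2S]
    · intro y hy z hz h
      obtain ⟨j, hj, rfl⟩ := List.mem_map.1 hy
      rw [hv j (List.mem_range.1 hj)] at h
      simp only [List.mem_cons, List.not_mem_nil, or_false] at hz
      rcases hz with rfl | rfl
      · simp [s1S] at h
      · simp [s2S] at h
  have hlam : ∀ y ∈ ys, lam y = lam (w y) := by
    intro y hy
    rcases hys _ hy with ⟨l, hl, rfl⟩ | rfl | rfl
    · rw [hwv l hl]; exact hlamv l hl
    · rw [hw1]; exact hlams1
    · rw [hw2]; exact hlams2
  -- which of the new variables lie in the minimal primes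
  have hZv : ∀ p : Fin n, ∀ y ∈ ys, y ∈ Zset a b p →
      ∃ j, j < k - 1 ∧ y = vvS n k j ∧ ro p ≤ j := by
    intro p y hy hyZ
    rcases hyZ with ⟨c, hcp, rfl⟩ | ⟨c, hcp, rfl⟩
    · exfalso
      rcases hbcases c with ⟨h1, h'⟩ | h'
      · have h2 : (c : ℕ) < p := hcp
        have := p.2; omega
      · exact hysx _ (h' ▸ hy)
    · have h2 : (p : ℕ) < c := hcp
      have hcc := hc c
      rcases hacases c with ⟨h1, h2, h3⟩ | ⟨h1, h1', h2, h3⟩ | ⟨h1, h3⟩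
      · rw [h1, h2, hi0] at hcc; omega
      · refine ⟨ro c - 1, h1', ?_, ?_⟩
        · rw [h3, hv _ h1']
        · have h4 := hrole p c hcp
          have h5 : ro p ≠ ro c := by
            intro h
            have := hc p
            rw [h] at this
            omega
          omega
      · exact absurd (h3 ▸ hy) (hysx _)
  have hWR : WR As Mpark := by
    have hD : Mpark = Dideal K a b (n - 1 + 1) := by
      rw [hMpark, Dideal]
      congr 1
      ext f
      constructor
      · rintro ⟨c, c', h, rfl⟩
        refine ⟨_, Or.inl ⟨c, c', h, by have := c'.2; omega, rfl⟩, ?_⟩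
        rw [hAa, hAb]
        simp only [X, monomial_mul, one_mul]
      · rintro ⟨_, ⟨c, c', h, -, rfl⟩ | ⟨c, h, -⟩, rfl⟩
        · refine ⟨c, c', h, ?_⟩
          rw [hAa, hAb]
          simp only [X, monomial_mul, one_mul]
        · have := c.2; omega
    rw [hD]
    refine WR_Dideal (by omega) a b hainj hab As ?_ (n - 1) (by omega)
    intro p
    rw [hAs']
    refine WR_vars _ w ys hnd ?_ ?_ ?_
    · intro y hy
      obtain ⟨j, hj⟩ := hwx y hy
      rw [hj]; exact hysx j
    · intro y hy hyZ hwZ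
      obtain ⟨j, hj, rfl, hpj⟩ := hZv p y hy hyZ
      rw [hwv j hj] at hwZ
      have h1 := hpos (j + 2) (by omega)
      have h2 := hle (j + 2) (by omega)
      rcases hwZ with ⟨c, hcp, h⟩ | ⟨c, hcp, h⟩
      · have h3 := hbx c _ h.symm h1 h2
        have h4 := hrole c p hcp
        have h5 := hstep (ro c) (j + 2) (by omega) (by omega)
        have := hto c
        omega
      · obtain ⟨h0, h3⟩ := hax c _ h.symm h1 h2
        have := hto c
        rcases Nat.lt_or_ge (ro c) (j + 2) with h4 | h4
        · have h5 := hstep (ro c) (j + 2) (by omega) (by omega)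
          omega
        · have h5 := hmono (ro c) (hro c).le (j + 2) h4
          omega
    · intro y hy y' hy' hyZ hyZ' h
      obtain ⟨j, hj, rfl, -⟩ := hZv p y hy hyZ
      obtain ⟨j', hj', rfl, -⟩ := hZv p y' hy' hyZ'
      rw [hwv j hj, hwv j' hj'] at h
      have h1 := hx _ _ (hpos (j + 2) (by omega)) (hle (j + 2) (by omega))
        (hpos (j' + 2) (by omega)) (hle (j' + 2) (by omega)) h
      rcases lt_trichotomy j j' with h2 | h2 | h2
      · have h3 := hstep (j + 2) (j' + 2) (by omega) (by omega)
        have h4 := himono (j + 2) (by omega)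
        omega
      · rw [h2]
      · have h3 := hstep (j' + 2) (j + 2) (by omega) (by omega)
        have h4 := himono (j' + 2) (by omega)
        omega
  have hM0 : Mpark ≤ RingHom.ker
      (constantCoeff : MvPolynomial (SVar n k) K →+* K) := by
    rw [hMpark, Ideal.span_le]
    rintro _ ⟨c, c', -, rfl⟩
    simp [RingHom.mem_ker, hAa, hAb]
  rw [hAs'] at hWR ⊢
  exact regSeq_of_WR lam Itop Mpark hinit hM0 ys w hlam hWR
end
end

section
/- Let ψ : S → R_{n+1} be the K-algebra homomorphism determined by ψ(x_i) = x_i for 1 ≤ i ≤ n+1, ψ(x_{v_j}) = x_{i_{j+2}} for 0 ≤ j ≤ k−2, ψ(x_{s_1}) = x_{i_{k−1}}, and ψ(x_{s_2}) = x_{i_1}. Then ψ(I_{Π,M} + ⟨𝒜⟩) = P_n; consequently ψ induces a K-algebra isomorphism S/(I_{Π,M} + ⟨𝒜⟩) ≅ R_{n+1}/P_n (equivalently, S/I_{Π,M} ⊗_S S/⟨𝒜⟩ ≅ R_{n+1}/P_n as R_{n+1}-modules). -/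
noncomputable section

open MvPolynomial

/-- The index in `Fin (n+1)` of the paper's variable `x_m` of `R_{n+1}`, `1 ≤ m ≤ n + 1`. -/
def xIdx (n : ℕ) (m : ℕ) : Fin (n + 1) := ⟨(m - 1) % (n + 1), Nat.mod_lt _ (Nat.succ_pos n)⟩

/-- The defining ideal `P_n ⊆ K[x_1,…,x_{n+1}]` of the rational normal curve of degree `n`. -/
def Pideal (n : ℕ) (K : Type*) [Field K] : Ideal (MvPolynomial (Fin (n + 1)) K) :=
  Ideal.span { f | ∃ i j : ℕ, 2 ≤ i ∧ i ≤ j ∧ j ≤ n ∧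
    f = X (xIdx n i) * X (xIdx n j) - X (xIdx n (i - 1)) * X (xIdx n (j + 1)) }

/-- The `K`-algebra homomorphism `ψ : S → R_{n+1}` with `ψ(x_m) = x_m`,
`ψ(x_{v_j}) = x_{i_{j+2}}`, `ψ(x_{s_1}) = x_{i_{k-1}}`, `ψ(x_{s_2}) = x_{i_1}`. -/
def psiMap (n k : ℕ) (K : Type*) [Field K] (i : ℕ → ℕ) :
    MvPolynomial (SVar n k) K →ₐ[K] MvPolynomial (Fin (n + 1)) K :=
  aeval (Sum.elim (fun j : Fin (n + 1) => X j)
    (Sum.elim (fun j : Fin (k - 1) => X (xIdx n (i ((j : ℕ) + 2))))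
      (fun t : Fin 2 => if t = 0 then X (xIdx n (i (k - 1))) else X (xIdx n (i 1)))))

lemma exists_block (k : ℕ) (i : ℕ → ℕ) (m : ℕ) (h0 : i 0 ≤ m) (hk : m < i k) :
    ∃ r < k, i r ≤ m ∧ m < i (r + 1) := by
  induction k with
  | zero => omega
  | succ k ih =>
    by_cases h : m < i k
    · obtain ⟨r, hr, h1, h2⟩ := ih h
      exact ⟨r, by omega, h1, h2⟩
    · exact ⟨k, by omega, by omega, hk⟩

lemma i_le_last (k : ℕ) (i : ℕ → ℕ) (hm : ∀ r < k, i r < i (r + 1)) :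
    ∀ r ≤ k, i r ≤ i k := by
  induction k with
  | zero => intro r hr; simp_all
  | succ k ih =>
    intro r hr
    rcases Nat.lt_or_ge k r with h | h
    · have : r = k + 1 := by omega
      rw [this]
    · have h1 := ih (fun r hr => hm r (by omega)) r h
      have h2 := hm k (by omega)
      omega

lemma i_ge_first (k : ℕ) (i : ℕ → ℕ) (hm : ∀ r < k, i r < i (r + 1)) :
    ∀ r ≤ k, i 0 ≤ i r := by
  intro r
  induction r with
  | zero => simp
  | succ r ih =>
    intro hr
    have h1 := ih (by omega)
    have h2 := hm r (by omega)
    omega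

lemma psi_x (n k : ℕ) (K : Type*) [Field K] (i : ℕ → ℕ) (j : ℕ) :
    psiMap n k K i (X (xvS n k j)) = X (xIdx n j) := by
  simp [psiMap, xvS, xIdx]

lemma psi_v (n k : ℕ) (K : Type*) [Field K] (i : ℕ → ℕ) (j : ℕ) (hj : j < k - 1) :
    psiMap n k K i (X (vvS n k j)) = X (xIdx n (i (j + 2))) := by
  simp [psiMap, vvS, hj]

lemma psi_s1 (n k : ℕ) (K : Type*) [Field K] (i : ℕ → ℕ) :
    psiMap n k K i (X (s1S n k)) = X (xIdx n (i (k - 1))) := by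
  simp [psiMap, s1S]

lemma psi_s2 (n k : ℕ) (K : Type*) [Field K] (i : ℕ → ℕ) :
    psiMap n k K i (X (s2S n k)) = X (xIdx n (i 1)) := by
  simp [psiMap, s2S]

/-- `ψ(I_{Π,M} + ⟨𝒜⟩) = P_n`, and `ψ` induces a `K`-algebra isomorphism
`S/(I_{Π,M} + ⟨𝒜⟩) ≅ R_{n+1}/P_n`. -/
theorem statement_15 (K : Type*) [Field K] (n k : ℕ) (hn : 2 ≤ n) (hk : 2 ≤ k)
    (i : ℕ → ℕ) (hi0 : i 0 = 1) (hik : i k = n + 1) (himono : ∀ r < k, i r < i (r + 1))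
    (A : Matrix (Fin 2) (Fin n) (MvPolynomial (SVar n k) K))
    (hA1 : ∀ r t : ℕ, r < k → t < i (r + 1) - i r → ∀ c : Fin n, (c : ℕ) = i r - 1 + t →
      A 1 c = if r = k - 1 ∧ t = i k - i (k - 1) - 1 then X (s1S n k)
              else X (xvS n k (i (r + 1) - 1 - t)))
    (hA0 : ∀ r t : ℕ, r < k → t < i (r + 1) - i r → ∀ c : Fin n, (c : ℕ) = i r - 1 + t →
      A 0 c = if t = 0 then (if r = 0 then X (s2S n k) else X (vvS n k (r - 1)))
              else X (xvS n k (i (r + 1) - t)))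
    (Itop : Ideal (MvPolynomial (SVar n k) K))
    (hItop : Itop = Ideal.span { f | ∃ c₁ c₂ : Fin n, c₁ < c₂ ∧
      f = A 0 c₁ * A 1 c₂ - A 0 c₂ * A 1 c₁ })
    (As : List (MvPolynomial (SVar n k) K))
    (hAs : As = ((List.range (k - 1)).map fun j => X (vvS n k j) - X (xvS n k (i (j + 2))))
      ++ [X (s1S n k) - X (xvS n k (i (k - 1))), X (s2S n k) - X (xvS n k (i 1))]) :
    Ideal.map (psiMap n k K i) (Itop ⊔ Ideal.span {a | a ∈ As}) = Pideal n K ∧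
    ∃ e : (MvPolynomial (SVar n k) K ⧸ (Itop ⊔ Ideal.span {a | a ∈ As})) ≃ₐ[K]
          (MvPolynomial (Fin (n + 1)) K ⧸ Pideal n K),
      ∀ f : MvPolynomial (SVar n k) K,
        e (Ideal.Quotient.mk _ f) = Ideal.Quotient.mk _ (psiMap n k K i f) := by
  have hlast := i_le_last k i himono
  have hfirst := i_ge_first k i himono
  -- the image of every column
  have hcol : ∀ r t : ℕ, r < k → t < i (r + 1) - i r → ∀ c : Fin n, (c : ℕ) = i r - 1 + t →
      psiMap n k K i (A 0 c) = X (xIdx n (i (r + 1) - 1 - t + 1)) ∧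
      psiMap n k K i (A 1 c) = X (xIdx n (i (r + 1) - 1 - t)) := by
    intro r t hr ht c hc
    rw [hA0 r t hr ht c hc, hA1 r t hr ht c hc]
    constructor
    · split_ifs with h1 h2
      · subst h1 h2
        rw [psi_s2]
        congr 2
        simp only [zero_add] at *
        omega
      · subst h1
        rw [psi_v _ _ _ _ _ (by omega)]
        have e : r - 1 + 2 = r + 1 := by omega
        rw [e]
        congr 2
        omega
      · rw [psi_x]
        congr 2
        omega
    · split_ifs with h1
      · obtain ⟨h1, h2⟩ := h1
        rw [psi_s1]
        have e : r + 1 = k := by omega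
        rw [e] at ht ⊢
        rw [h1] at ht
        congr 2
        omega
      · rw [psi_x]
  have hcol1 : ∀ c : Fin n, ∃ m, 1 ≤ m ∧ m ≤ n ∧
      psiMap n k K i (A 0 c) = X (xIdx n (m + 1)) ∧
      psiMap n k K i (A 1 c) = X (xIdx n m) := by
    intro c
    have hc := c.2
    obtain ⟨r, hr, h1, h2⟩ := exists_block k i (c + 1) (by omega) (by omega)
    have hf := hfirst r (by omega)
    have hl := hlast (r + 1) (by omega)
    exact ⟨i (r + 1) - 1 - (c + 1 - i r), by omega, by omega,
      hcol r (c + 1 - i r) hr (by omega) c (by omega)⟩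
  have hcol2 : ∀ m, 1 ≤ m → m ≤ n → ∃ c : Fin n,
      psiMap n k K i (A 0 c) = X (xIdx n (m + 1)) ∧
      psiMap n k K i (A 1 c) = X (xIdx n m) := by
    intro m hm1 hmn
    obtain ⟨r, hr, h1, h2⟩ := exists_block k i m (by omega) (by omega)
    have hf := hfirst r (by omega)
    have hl := hlast (r + 1) (by omega)
    have := hcol r (i (r + 1) - 1 - m) hr (by omega)
      ⟨i r - 1 + (i (r + 1) - 1 - m), by omega⟩ rfl
    have e : i (r + 1) - 1 - (i (r + 1) - 1 - m) = m := by omega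
    rw [e] at this
    exact ⟨_, this⟩
  have hgen : ∀ a b : ℕ, 1 ≤ a → a < b → b ≤ n →
      (X (xIdx n (a + 1)) * X (xIdx n b) - X (xIdx n (b + 1)) * X (xIdx n a) :
        MvPolynomial (Fin (n + 1)) K) ∈ Pideal n K := by
    intro a b ha hab hb
    refine Ideal.subset_span ⟨a + 1, b, by omega, by omega, hb, ?_⟩
    simp only [Nat.add_sub_cancel]
    ring
  have hmemA : ∀ a ∈ As, psiMap n k K i a = 0 := by
    intro a ha
    rw [hAs] at ha
    simp only [List.mem_append, List.mem_map, List.mem_range, List.mem_cons, List.not_mem_nil,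
      or_false] at ha
    rcases ha with ⟨j, hj, rfl⟩ | rfl | rfl
    · rw [map_sub, psi_v _ _ _ _ _ hj, psi_x, sub_self]
    · rw [map_sub, psi_s1, psi_x, sub_self]
    · rw [map_sub, psi_s2, psi_x, sub_self]
  have hmap : Ideal.map (psiMap n k K i) (Itop ⊔ Ideal.span {a | a ∈ As}) = Pideal n K := by
    apply le_antisymm
    · rw [Ideal.map_le_iff_le_comap, sup_le_iff, hItop]
      constructor
      · rw [Ideal.span_le]
        rintro f ⟨c₁, c₂, -, rfl⟩
        obtain ⟨a, ha1, han, ha2, ha3⟩ := hcol1 c₁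
        obtain ⟨b, hb1, hbn, hb2, hb3⟩ := hcol1 c₂
        change psiMap n k K i _ ∈ Pideal n K
        rw [map_sub, map_mul, map_mul, ha2, ha3, hb2, hb3]
        rcases lt_trichotomy a b with h | h | h
        · exact hgen a b ha1 h hbn
        · subst h
          rw [sub_self]
          exact zero_mem _
        · rw [← neg_sub]
          exact neg_mem (hgen b a hb1 h han)
      · rw [Ideal.span_le]
        intro a ha
        change psiMap n k K i _ ∈ Pideal n K
        rw [hmemA a ha]
        exact zero_mem _
    · rw [Pideal, Ideal.span_le]
      rintro f ⟨p, q, hp, hpq, hq, rfl⟩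
      obtain ⟨c, hc0, hc1⟩ := hcol2 (p - 1) (by omega) (by omega)
      obtain ⟨d, hd0, hd1⟩ := hcol2 q (by omega) hq
      rw [Nat.sub_add_cancel (by omega)] at hc0
      have key : A 0 c * A 1 d - A 0 d * A 1 c ∈ Itop := by
        rw [hItop]
        rcases lt_trichotomy c d with h | h | h
        · exact Ideal.subset_span ⟨c, d, h, rfl⟩
        · subst h
          rw [sub_self]
          exact zero_mem _
        · rw [← neg_sub]
          exact neg_mem (Ideal.subset_span ⟨d, c, h, rfl⟩)
      have := Ideal.mem_map_of_mem (psiMap n k K i)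
        (Ideal.mem_sup_left (T := Ideal.span {a | a ∈ As}) key)
      rw [map_sub, map_mul, map_mul, hc0, hc1, hd0, hd1] at this
      have e : (X (xIdx n p) * X (xIdx n q) - X (xIdx n (p - 1)) * X (xIdx n (q + 1)) :
          MvPolynomial (Fin (n + 1)) K) = X (xIdx n p) * X (xIdx n q) -
            X (xIdx n (q + 1)) * X (xIdx n (p - 1)) := by ring
      rw [e]
      exact this
  refine ⟨hmap, ?_⟩
  -- section of `ψ`
  let φ : MvPolynomial (Fin (n + 1)) K →ₐ[K] MvPolynomial (SVar n k) K := rename Sum.inl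
  have hpsiphi : ∀ g, psiMap n k K i (φ g) = g := by
    intro g
    have : (psiMap n k K i).comp φ = AlgHom.id K _ := by
      ext j
      simp [φ, psiMap]
    exact DFunLike.congr_fun this g
  have hφx : ∀ m, φ (X (xIdx n m)) = X (xvS n k m) := by
    intro m
    simp [φ, xIdx, xvS]
  have hA_v : ∀ j < k - 1, X (vvS n k j) - X (xvS n k (i (j + 2))) ∈ As := by
    intro j hj
    rw [hAs]
    exact List.mem_append_left _ (List.mem_map.2 ⟨j, List.mem_range.2 hj, rfl⟩)
  have hA_s1 : X (s1S n k) - X (xvS n k (i (k - 1))) ∈ As := by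
    rw [hAs]; simp
  have hA_s2 : X (s2S n k) - X (xvS n k (i 1)) ∈ As := by
    rw [hAs]; simp
  have hphipsi : ∀ f, f - φ (psiMap n k K i f) ∈ Ideal.span {a | a ∈ As} := by
    intro f
    have : (Ideal.Quotient.mkₐ K (Ideal.span {a | a ∈ As})) =
        (Ideal.Quotient.mkₐ K (Ideal.span {a | a ∈ As})).comp (φ.comp (psiMap n k K i)) := by
      apply MvPolynomial.algHom_ext
      intro v
      change Ideal.Quotient.mk _ _ = Ideal.Quotient.mk _ (φ (psiMap n k K i (X v)))
      rw [Ideal.Quotient.eq]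
      rcases v with j | j | t
      · have : φ (psiMap n k K i (X (Sum.inl j))) = X (Sum.inl j) := by simp [φ, psiMap]
        rw [this, sub_self]
        exact zero_mem _
      · have e : (Sum.inr (Sum.inl j) : SVar n k) = vvS n k j := by simp [vvS]
        rw [e, psi_v _ _ _ _ _ j.2, hφx]
        exact Ideal.subset_span (hA_v j j.2)
      · fin_cases t
        · change X (s1S n k) - φ (psiMap n k K i (X (s1S n k))) ∈ _
          rw [psi_s1, hφx]
          exact Ideal.subset_span hA_s1
        · change X (s2S n k) - φ (psiMap n k K i (X (s2S n k))) ∈ _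
          rw [psi_s2, hφx]
          exact Ideal.subset_span hA_s2
    exact Ideal.Quotient.eq.1 (DFunLike.congr_fun this f)
  have hsurj : Function.Surjective (psiMap n k K i) := fun g => ⟨φ g, hpsiphi g⟩
  let θ := (Ideal.Quotient.mkₐ K (Pideal n K)).comp (psiMap n k K i)
  have hθ : Function.Surjective θ := (Ideal.Quotient.mkₐ_surjective K _).comp hsurj
  have hker : Itop ⊔ Ideal.span {a | a ∈ As} = RingHom.ker θ := by
    ext f
    have h1 : f ∈ RingHom.ker θ ↔ psiMap n k K i f ∈ Pideal n K := by
      rw [RingHom.mem_ker]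
      exact Ideal.Quotient.eq_zero_iff_mem
    rw [h1, ← hmap]
    constructor
    · exact fun h => Ideal.mem_map_of_mem _ h
    · intro h
      obtain ⟨g, hg, hgf⟩ := (Ideal.mem_map_iff_of_surjective _ hsurj).1 h
      have h2 := hphipsi (f - g)
      rw [map_sub, hgf, sub_self, map_zero, sub_zero] at h2
      have h3 := add_mem (Ideal.mem_sup_right (S := Itop) h2) hg
      rwa [sub_add_cancel] at h3
  refine ⟨(Ideal.quotientEquivAlgOfEq K hker).trans
    (Ideal.quotientKerAlgEquivOfSurjective hθ), fun f => rfl⟩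
end
end

section
/- For every parcycle (C_n,Π) with Π = {V_1,…,V_k} and sink V_k, there exists a weight vector λ ∈ ℕ^n such that λ·b_{V_i} > 0 for every i = 1,…,k−1. -/
noncomputable section

open MvPolynomial

/-- Row of the Laplacian matrix of the `n`-cycle on `Fin n`
(vertex `j` of the paper corresponds to index `j-1`). -/
def cycLap (n : ℕ) [NeZero n] (j : Fin n) : Fin n → ℤ :=
  fun l => if l = j then 2 else if l = j + 1 ∨ j = l + 1 then -1 else 0

/-- The cycle graph `C_n` on `Fin n`. -/
def cycleG (n : ℕ) [NeZero n] : SimpleGraph (Fin n) :=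
  SimpleGraph.fromRel (fun i j => j = i + 1)

/-- The lattice ideal of a lattice `L ⊆ ℤ^n` in `K[x_1,…,x_n]`. -/
def latticeIdeal (n : ℕ) (K : Type*) [Field K] (L : Submodule ℤ (Fin n → ℤ)) :
    Ideal (MvPolynomial (Fin n) K) :=
  Ideal.span { f | ∃ u v : Fin n → ℕ,
    ((fun i => (u i : ℤ)) - fun i => (v i : ℤ)) ∈ L ∧
    f = (∏ i, X i ^ u i) - ∏ i, X i ^ v i }

open Classical in
/-- The exponent vector of the monomial `x^{S → S̄}`: the `i`-th entry is the number
of edges of the cycle joining `i ∈ S` to the complement of `S`. -/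
def outVec (n : ℕ) [NeZero n] (S : Set (Fin n)) (i : Fin n) : ℕ :=
  if i ∈ S then (if i + 1 ∈ S then 0 else 1) + (if i - 1 ∈ S then 0 else 1) else 0

/-- The monomial `x^{S → S̄}`. -/
def outMono (n : ℕ) (K : Type*) [NeZero n] [Field K] (S : Set (Fin n)) :
    MvPolynomial (Fin n) K :=
  ∏ i, X i ^ outVec n S i

open Classical in
/-- `b_V = ∑_{j ∈ V} b_j`, sum of Laplacian rows over a set of vertices. -/
def bPart (n : ℕ) [NeZero n] (S : Set (Fin n)) : Fin n → ℤ :=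
  ∑ j : Fin n, if j ∈ S then cycLap n j else 0

/-- The toppling ideal of the parcycle `(C_n, {V_1,…,V_k})`: the lattice ideal of the
lattice generated by the vectors `b_{V_j}`. -/
def topplingPar (n k : ℕ) (K : Type*) [NeZero n] [Field K] (V : Fin k → Set (Fin n)) :
    Ideal (MvPolynomial (Fin n) K) :=
  latticeIdeal n K (Submodule.span ℤ (Set.range fun j => bPart n (V j)))

/-- `S` is a connected-parset of the parcycle `(C_n, V)`: a union of parts inducing a
connected subgraph of the cycle. -/
def isConnParset (n k : ℕ) [NeZero n] (V : Fin k → Set (Fin n)) (S : Set (Fin n)) : Prop :=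
  (∃ T : Set (Fin k), S = ⋃ j ∈ T, V j) ∧ ((cycleG n).induce S).Connected

/-- The `G`-parking function ideal of a parcycle with sink part `V sink`. -/
def gparkIdeal (n k : ℕ) (K : Type*) [NeZero n] [Field K] (V : Fin k → Set (Fin n))
    (sink : Fin k) : Ideal (MvPolynomial (Fin n) K) :=
  Ideal.span { f | ∃ S : Set (Fin n), isConnParset n k V S ∧ ¬ V sink ⊆ S ∧
    f = outMono n K S }

open Classical in
/-- The `λ`-weight of an exponent vector. -/
def wdeg (n : ℕ) (lam : Fin n → ℕ) (u : Fin n →₀ ℕ) : ℕ := ∑ i, lam i * u i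

open Classical in
/-- The `λ`-initial form of a polynomial: the sum of its terms of maximal `λ`-weight. -/
def initForm (n : ℕ) (K : Type*) [Field K] (lam : Fin n → ℕ) (f : MvPolynomial (Fin n) K) :
    MvPolynomial (Fin n) K :=
  ∑ u ∈ f.support.filter (fun u => wdeg n lam u = f.support.sup (wdeg n lam)),
    monomial u (coeff u f)

/-- The `λ`-initial ideal of an ideal. -/
def initIdeal (n : ℕ) (K : Type*) [Field K] (lam : Fin n → ℕ)
    (I : Ideal (MvPolynomial (Fin n) K)) : Ideal (MvPolynomial (Fin n) K) :=
  Ideal.span { g | ∃ f ∈ I, f ≠ 0 ∧ g = initForm n K lam f }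

/-- The concave weight vector used in the proof. -/
def wLam (n : ℕ) (l : Fin n) : ℕ := (l.val + 1) * (n - 1 - l.val)

lemma cycLap_split (n : ℕ) [NeZero n] (hn : 3 ≤ n) (j l : Fin n) :
    cycLap n j l = (if l = j then 2 else 0) + (if l = j + 1 then -1 else 0)
      + (if l = j - 1 then -1 else 0) := by
  have h1 : (1 : Fin n).val = 1 := by
    rw [Fin.val_one', Nat.mod_eq_of_lt (by omega)]
  have e1 : (1 : Fin n) ≠ 0 := by
    intro h
    have := congrArg Fin.val h
    simp at this
    omega
  have e2 : (1 : Fin n) + 1 ≠ 0 := by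
    intro h
    have := congrArg Fin.val h
    rw [Fin.val_add, h1, Nat.mod_eq_of_lt (by omega)] at this
    simp at this
  have a1 : j ≠ j + 1 := fun h => e1 (by simpa using h)
  have a2 : j ≠ j - 1 := by
    intro h
    apply a1
    exact (eq_sub_iff_add_eq.mp h).symm
  have a3 : j + 1 ≠ j - 1 := by
    intro h
    apply e2
    have h' : j + 1 + 1 = j := by rw [h]; simp
    rw [add_assoc] at h'
    simpa using h'
  have a4 : j = l + 1 ↔ l = j - 1 := by
    rw [eq_sub_iff_add_eq, eq_comm]
  unfold cycLap
  simp only [a4]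
  by_cases c1 : l = j
  · subst c1; simp [a1, a2]
  · by_cases c2 : l = j + 1
    · subst c2; simp [a1.symm, a3]
    · simp [c1, c2]

lemma wLam_cycLap (n : ℕ) [NeZero n] (hn : 3 ≤ n) (j : Fin n) (hj : j.val ≠ n - 1) :
    ∑ l, (wLam n l : ℤ) * cycLap n j l = 2 := by
  have h1 : (1 : Fin n).val = 1 := by
    rw [Fin.val_one', Nat.mod_eq_of_lt (by omega)]
  have hjn := j.isLt
  simp only [cycLap_split n hn, mul_add, Finset.sum_add_distrib, mul_ite, mul_zero,
    Finset.sum_ite_eq', Finset.sum_ite_eq, Finset.mem_univ, if_true]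
  have p : (j + 1).val = j.val + 1 := by
    rw [Fin.val_add, h1, Nat.mod_eq_of_lt (by omega)]
  have key : ∀ x : Fin n, (wLam n x : ℤ) = ((x.val : ℤ) + 1) * (n - 1 - x.val) := by
    intro x
    have := x.isLt
    unfold wLam
    rw [Nat.cast_mul, Nat.cast_sub (by omega), Nat.cast_sub (by omega)]
    push_cast
    ring
  have q : (wLam n (j - 1) : ℤ) = (j.val : ℤ) * (n - j.val) := by
    rw [key]
    by_cases h0 : j.val = 0
    · have : (j - 1).val = n - 1 := by
        rw [Fin.val_sub, h1, h0, Nat.mod_eq_of_lt (by omega)]; omega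
      rw [this, h0, Nat.cast_sub (by omega)]
      push_cast
      ring
    · have : (j - 1).val = j.val - 1 := by
        rw [Fin.val_sub, h1, show n - 1 + j.val = (j.val - 1) + n by omega,
          Nat.add_mod_right, Nat.mod_eq_of_lt (by omega)]
      rw [this, Nat.cast_sub (by omega)]
      push_cast
      ring
  rw [q, key, key, p]
  push_cast
  ring

/-- For every parcycle `(C_n, Π)` with sink `V_k` there is a weight
vector `λ ∈ ℕ^n` with `λ · b_{V_i} > 0` for all `i = 1, …, k - 1`. -/
theorem statement_17 (n k : ℕ) [NeZero n] (hn : 3 ≤ n) (hk : 1 ≤ k)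
    (V : Fin k → Set (Fin n))
    (hcover : ∀ x : Fin n, ∃ j, x ∈ V j)
    (hdisj : ∀ j₁ j₂ : Fin k, j₁ ≠ j₂ → Disjoint (V j₁) (V j₂))
    (hconn : ∀ j, ((cycleG n).induce (V j)).Connected)
    (hsink : (⟨n - 1, by omega⟩ : Fin n) ∈ V ⟨k - 1, by omega⟩) :
    ∃ lam : Fin n → ℕ, ∀ j : Fin k, (j : ℕ) < k - 1 →
      0 < ∑ l, (lam l : ℤ) * bPart n (V j) l := by
  classical
  refine ⟨wLam n, fun j hj => ?_⟩
  have hns : ∀ x ∈ V j, x.val ≠ n - 1 := by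
    intro x hx hxe
    have hx' : x = ⟨n - 1, by omega⟩ := Fin.ext hxe
    rw [← hx'] at hsink
    refine Set.disjoint_left.mp (hdisj j ⟨k - 1, by omega⟩ ?_) hx hsink
    intro h
    have := congrArg Fin.val h
    simp at this
    omega
  have hsum : ∑ l, (wLam n l : ℤ) * bPart n (V j) l
      = ∑ i : Fin n, if i ∈ V j then (2 : ℤ) else 0 := by
    unfold bPart
    simp only [Finset.sum_apply, Finset.mul_sum]
    rw [Finset.sum_comm]
    refine Finset.sum_congr rfl fun i _ => ?_
    by_cases hi : i ∈ V j
    · simp only [hi, if_true]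
      exact wLam_cycLap n hn i (hns i hi)
    · simp [hi]
  rw [hsum]
  obtain ⟨⟨x, hx⟩⟩ := (hconn j).nonempty
  refine Finset.sum_pos' (fun i _ => ?_) ⟨x, Finset.mem_univ _, ?_⟩
  · split_ifs <;> norm_num
  · simp [hx]
end
end

section
/- Let L ⊆ ℤ^{n+1} be the lattice generated by the vectors b_1 + b_{n+1}, b_2, b_3, …, b_n, where b_1,…,b_{n+1} are the rows of the Laplacian matrix of the cycle C_{n+1}. Then the lattice ideal of L in R_{n+1} equals P_n; that is, the defining ideal of the rational normal curve of degree n is the toppling ideal of the parcycle (C_{n+1}, Π) with Π = {{1,n+1},{2},{3},…,{n}}. -/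
noncomputable section

open MvPolynomial

section Helpers

/-- One-step exchange relations on `y_0,…,y_n` give all exchange relations. -/
theorem aux_step {R : Type*} [CommRing R] (n : ℕ) (y : ℕ → R)
    (h : ∀ a b, 1 ≤ a → a ≤ b → b + 1 ≤ n → y a * y b = y (a - 1) * y (b + 1))
    (a b : ℕ) (ha : a + 1 ≤ n) (hb : b + 1 ≤ n) :
    y (a + 1) * y b = y a * y (b + 1) := by
  rcases lt_trichotomy a b with hab | hab | hab
  · have := h (a + 1) b (by omega) (by omega) hb
    simpa using this
  · subst hab
    ring
  · have := h (b + 1) a (by omega) (by omega) ha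
    simp only [Nat.add_sub_cancel] at this
    linear_combination -this

theorem aux_shift {R : Type*} [CommRing R] (n : ℕ) (y : ℕ → R)
    (h : ∀ a b, 1 ≤ a → a ≤ b → b + 1 ≤ n → y a * y b = y (a - 1) * y (b + 1))
    (k a b : ℕ) (ha : a + k ≤ n) (hb : b + k ≤ n) :
    y (a + k) * y b = y a * y (b + k) := by
  induction k generalizing b with
  | zero => rfl
  | succ k ih =>
    have h1 := aux_step n y h (a + k) b (by omega) (by omega)
    have h2 := ih (b + 1) (by omega) (by omega)
    rw [← add_assoc, h1, h2]
    congr 2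
    omega

/-- Normal form of a nonempty product. -/
theorem aux_nf {R : Type*} [CommRing R] (n : ℕ) (y : ℕ → R)
    (h : ∀ a b, 1 ≤ a → a ≤ b → b + 1 ≤ n → y a * y b = y (a - 1) * y (b + 1))
    (s : Multiset ℕ) (hs : ∀ i ∈ s, i ≤ n) : s = 0 ∨
    ∃ q r m, r ≤ n ∧ q + m + 1 = s.card ∧ q * n + r = s.sum ∧
      (s.map y).prod = y n ^ q * y r * y 0 ^ m := by
  induction s using Multiset.induction_on with
  | empty => left; rfl
  | cons a s ih =>
    right
    have ha : a ≤ n := hs a (Multiset.mem_cons_self a s)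
    rcases ih (fun i hi => hs i (Multiset.mem_cons_of_mem hi)) with rfl | ⟨q, r, m, hr, hc, hsum, hp⟩
    · exact ⟨0, a, 0, ha, by simp, by simp, by simp⟩
    · by_cases har : a + r ≤ n
      · refine ⟨q, a + r, m + 1, har, ?_, ?_, ?_⟩
        · rw [Multiset.card_cons]; omega
        · rw [Multiset.sum_cons]; omega
        · have h1 := aux_shift n y h a 0 r (by omega) (by omega)
          rw [Multiset.map_cons, Multiset.prod_cons, hp, pow_succ, add_comm a r]
          rw [zero_add] at h1
          linear_combination (y n ^ q * y 0 ^ m) * h1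
      · refine ⟨q + 1, a + r - n, m, by omega, ?_, ?_, ?_⟩
        · rw [Multiset.card_cons]; omega
        · rw [Multiset.sum_cons, add_mul]; omega
        · have h1 := aux_shift n y h (n - r) (a + r - n) r (by omega) (by omega)
          rw [show a + r - n + (n - r) = a by omega, show r + (n - r) = n by omega] at h1
          rw [Multiset.map_cons, Multiset.prod_cons, hp, pow_succ]
          linear_combination (y n ^ q * y 0 ^ m) * h1

theorem aux_eq {R : Type*} [CommRing R] (n : ℕ) (y : ℕ → R)
    (h : ∀ a b, 1 ≤ a → a ≤ b → b + 1 ≤ n → y a * y b = y (a - 1) * y (b + 1))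
    (s t : Multiset ℕ) (hs : ∀ i ∈ s, i ≤ n) (ht : ∀ i ∈ t, i ≤ n)
    (hc : s.card = t.card) (hsum : s.sum = t.sum) :
    (s.map y).prod = (t.map y).prod := by
  rcases aux_nf n y h s hs with rfl | ⟨q, r, m, hr, hc1, hs1, hp1⟩
  · have : t = 0 := by
      rw [← Multiset.card_eq_zero, ← hc]; rfl
    rw [this]
  rcases aux_nf n y h t ht with rfl | ⟨q', r', m', hr', hc2, hs2, hp2⟩
  · simp at hc
    subst hc
    rfl
  have key : ∀ q r m q' r' m' : ℕ, r ≤ n → r' ≤ n → q + m = q' + m' →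
      q * n + r = q' * n + r' → q < q' →
      y n ^ q * y r * y 0 ^ m = y n ^ q' * y r' * y 0 ^ m' := by
    intro q r m q' r' m' hr hr' h1 h2 h3
    obtain ⟨k, rfl⟩ : ∃ k, q' = q + 1 + k := ⟨q' - (q + 1), by omega⟩
    have h4 : (q + 1 + k) * n = q * n + n + k * n := by ring
    have h5 : r = n := by omega
    have h6 : r' = 0 := by omega
    have h7 : k * n = 0 := by omega
    subst h5 h6
    rcases Nat.mul_eq_zero.1 h7 with rfl | h8
    · obtain rfl : m = m' + 1 := by omega
      ring
    · subst h8
      rw [← pow_succ, ← pow_add, ← pow_succ, ← pow_add]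
      congr 1
      omega
  rw [hp1, hp2]
  rcases lt_trichotomy q q' with hq | hq | hq
  · exact key _ _ _ _ _ _ hr hr' (by omega) (by omega) hq
  · subst hq
    obtain rfl : r = r' := by omega
    obtain rfl : m = m' := by omega
    rfl
  · exact (key _ _ _ _ _ _ hr' hr (by omega) (by omega) hq).symm

/-- Multiset of indices attached to an exponent vector. -/
theorem aux_ms {R : Type*} [CommRing R] (N : ℕ) (y : ℕ → R) (S : Finset (Fin N)) (u : Fin N → ℕ) :
    ∃ s : Multiset ℕ, (∀ i ∈ s, i < N) ∧ s.card = ∑ i ∈ S, u i ∧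
      s.sum = ∑ i ∈ S, (i : ℕ) * u i ∧ (s.map y).prod = ∏ i ∈ S, y i ^ u i := by
  induction S using Finset.induction_on with
  | empty => exact ⟨0, by simp⟩
  | insert a S ha ih =>
    obtain ⟨s, h1, h2, h3, h4⟩ := ih
    refine ⟨Multiset.replicate (u a) (a : ℕ) + s, ?_, ?_, ?_, ?_⟩
    · intro i hi
      rcases Multiset.mem_add.1 hi with hi | hi
      · rw [Multiset.eq_of_mem_replicate hi]; exact a.2
      · exact h1 i hi
    · rw [Finset.sum_insert ha, ← h2]; simp
    · rw [Finset.sum_insert ha, ← h3]; simp [mul_comm]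
    · rw [Finset.prod_insert ha, ← h4]; simp

/-- Unit vectors indexed by natural numbers. -/
def auxE (n k : ℕ) : Fin (n + 1) → ℤ := fun l => if l.val = k then 1 else 0

theorem auxE_sum (n k : ℕ) (hk : k ≤ n) (f : Fin (n + 1) → ℤ) :
    ∑ i, f i * auxE n k i = f ⟨k, by omega⟩ := by
  rw [Finset.sum_eq_single (⟨k, by omega⟩ : Fin (n + 1))]
  · simp [auxE]
  · intro b _ hb
    have : b.val ≠ k := fun h => hb (Fin.ext h)
    simp [auxE, this]
  · simp

theorem cycLap_inner (n k : ℕ) (hk : k + 2 ≤ n) :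
    cycLap (n + 1) (⟨k + 1, by omega⟩ : Fin (n + 1)) =
      (2 : ℤ) • auxE n (k + 1) - auxE n k - auxE n (k + 2) := by
  funext l
  have hl := l.2
  simp only [cycLap, auxE, Pi.sub_apply, Pi.smul_apply, smul_eq_mul, Fin.ext_iff, Fin.val_add_one, Fin.val_last]
  have hk' : ¬ k + 1 = n := by omega
  by_cases h : l.val = n <;> simp only [h, hk', if_true, if_false] <;> split_ifs <;>
    first | omega | (exfalso; simp_all; done) | (exfalso; simp_all; omega)

theorem cycLap_ends (n : ℕ) (hn : 2 ≤ n) :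
    cycLap (n + 1) (0 : Fin (n + 1)) + cycLap (n + 1) (Fin.last n) =
      auxE n 0 - auxE n 1 - auxE n (n - 1) + auxE n n := by
  funext l
  have hl := l.2
  simp only [cycLap, auxE, Pi.sub_apply, Pi.add_apply, Fin.ext_iff, Fin.val_add_one, Fin.val_last,
    Fin.val_zero]
  have hk' : ¬ 0 = n := by omega
  by_cases h : l.val = n <;> simp only [h, hk', if_true, if_false] <;> split_ifs <;>
    first | omega | (exfalso; simp_all; done) | (exfalso; simp_all; omega)

/-- The lattice of the statement. -/
abbrev auxL (n : ℕ) : Submodule ℤ (Fin (n + 1) → ℤ) := Submodule.span ℤ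
      (insert (cycLap (n + 1) (0 : Fin (n + 1)) + cycLap (n + 1) (Fin.last n))
        { w | ∃ j : Fin (n + 1), j ≠ 0 ∧ j ≠ Fin.last n ∧ w = cycLap (n + 1) j })

theorem auxL_lin (n : ℕ) (hn : 2 ≤ n) (p q : ℤ) (w : Fin (n + 1) → ℤ) (hw : w ∈ auxL n) :
    ∑ i, (p + q * (i.val : ℤ)) * w i = 0 := by
  induction hw using Submodule.span_induction with
  | mem w hw =>
    rcases hw with rfl | ⟨j, hj0, hjn, rfl⟩
    · rw [cycLap_ends n hn]
      have hf : ∀ i : Fin (n + 1), (p + q * (i.val : ℤ)) *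
          (auxE n 0 - auxE n 1 - auxE n (n - 1) + auxE n n) i =
          (p + q * (i.val : ℤ)) * auxE n 0 i - (p + q * (i.val : ℤ)) * auxE n 1 i
            - (p + q * (i.val : ℤ)) * auxE n (n - 1) i + (p + q * (i.val : ℤ)) * auxE n n i := by
        intro i
        simp only [Pi.sub_apply, Pi.add_apply]
        ring
      rw [Finset.sum_congr rfl (fun i _ => hf i), Finset.sum_add_distrib, Finset.sum_sub_distrib,
        Finset.sum_sub_distrib]
      rw [auxE_sum n 0 (by omega) (fun i => p + q * (i.val : ℤ)),
        auxE_sum n 1 (by omega) (fun i => p + q * (i.val : ℤ)),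
        auxE_sum n (n - 1) (by omega) (fun i => p + q * (i.val : ℤ)),
        auxE_sum n n (by omega) (fun i => p + q * (i.val : ℤ))]
      push_cast [Nat.cast_sub (show 1 ≤ n by omega)]
      ring
    · obtain ⟨j, hj⟩ := j
      obtain ⟨k, rfl⟩ : ∃ k, j = k + 1 := ⟨j - 1, by
        have : j ≠ 0 := fun h => hj0 (Fin.ext h)
        omega⟩
      have hk : k + 2 ≤ n := by
        have : k + 1 ≠ n := fun h => hjn (Fin.ext h)
        omega
      have hf : ∀ i : Fin (n + 1), (p + q * (i.val : ℤ)) *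
          ((2 : ℤ) • auxE n (k + 1) - auxE n k - auxE n (k + 2)) i =
          2 * ((p + q * (i.val : ℤ)) * auxE n (k + 1) i) - (p + q * (i.val : ℤ)) * auxE n k i
            - (p + q * (i.val : ℤ)) * auxE n (k + 2) i := by
        intro i
        simp only [Pi.sub_apply, Pi.smul_apply, smul_eq_mul]
        ring
      rw [cycLap_inner n k hk, Finset.sum_congr rfl (fun i _ => hf i), Finset.sum_sub_distrib,
        Finset.sum_sub_distrib, ← Finset.mul_sum,
        auxE_sum n (k + 1) (by omega) (fun i => p + q * (i.val : ℤ)),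
        auxE_sum n k (by omega) (fun i => p + q * (i.val : ℤ)),
        auxE_sum n (k + 2) (by omega) (fun i => p + q * (i.val : ℤ))]
      push_cast
      ring
  | zero => simp
  | add x y _ _ hx hy =>
    simp only [Pi.add_apply, mul_add, Finset.sum_add_distrib] at *
    linarith
  | smul a x _ hx =>
    have : ∀ i : Fin (n + 1), (p + q * (i.val : ℤ)) * (a • x) i =
        a * ((p + q * (i.val : ℤ)) * x i) := by
      intro i
      simp only [Pi.smul_apply, smul_eq_mul]
      ring
    rw [Finset.sum_congr rfl (fun i _ => this i), ← Finset.mul_sum, hx, mul_zero]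

theorem auxL_mem (n i d : ℕ) (h : i + d + 2 ≤ n) :
    auxE n (i + 1) + auxE n (i + d + 1) - (auxE n i + auxE n (i + d + 2)) ∈ auxL n := by
  have hb : ∀ k, k + 2 ≤ n → (2 : ℤ) • auxE n (k + 1) - auxE n k - auxE n (k + 2) ∈ auxL n := by
    intro k hk
    rw [← cycLap_inner n k hk]
    apply Submodule.subset_span
    right
    refine ⟨_, ?_, ?_, rfl⟩
    · simp [Fin.ext_iff]
    · simp only [ne_eq, Fin.ext_iff, Fin.val_last]; omega
  induction d with
  | zero =>
    convert hb i (by omega) using 1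
    simp only [add_zero]
    module
  | succ d ih =>
    have h1 := Submodule.add_mem _ (ih (by omega)) (hb (i + d + 1) (by omega))
    convert h1 using 1
    simp only [← add_assoc, show i + d + 1 + 2 = i + d + 3 by omega,
      show i + d + 1 + 1 = i + d + 2 by omega]
    module

theorem aux_prodE {R : Type*} [CommRing R] (n a b : ℕ) (ha : a ≤ n) (hb : b ≤ n)
    (y : Fin (n + 1) → R) :
    ∏ i, y i ^ ((if i.val = a then 1 else 0) + (if i.val = b then 1 else 0)) =
      y ⟨a, by omega⟩ * y ⟨b, by omega⟩ := by
  have h : ∀ c (hc : c ≤ n), ∏ i : Fin (n + 1), y i ^ (if i.val = c then 1 else 0) =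
      y ⟨c, by omega⟩ := by
    intro c hc
    rw [Finset.prod_eq_single (⟨c, by omega⟩ : Fin (n + 1))]
    · simp
    · intro d _ hd
      have : d.val ≠ c := fun h => hd (Fin.ext h)
      simp [this]
    · simp
  simp only [pow_add, Finset.prod_mul_distrib]
  rw [h a ha, h b hb]

theorem aux_xIdx (n k : ℕ) (hk : k ≤ n) : xIdx n (k + 1) = ⟨k, by omega⟩ := by
  apply Fin.ext
  simp only [xIdx, Nat.add_sub_cancel]
  exact Nat.mod_eq_of_lt (by omega)

end Helpers

/-- The lattice ideal of the lattice `L ⊆ ℤ^{n+1}` generated by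
`b_1 + b_{n+1}, b_2, …, b_n` (rows of the Laplacian of the cycle `C_{n+1}`) equals `P_n`:
the rational normal curve is the toppling ideal of the parcycle
`(C_{n+1}, {{1, n+1}, {2}, …, {n}})`. -/
theorem statement_18 (K : Type*) [Field K] (n : ℕ) (hn : 2 ≤ n) :
    latticeIdeal (n + 1) K (Submodule.span ℤ
      (insert (cycLap (n + 1) (0 : Fin (n + 1)) + cycLap (n + 1) (Fin.last n))
        { w | ∃ j : Fin (n + 1), j ≠ 0 ∧ j ≠ Fin.last n ∧ w = cycLap (n + 1) j }))
      = Pideal n K := by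
  apply le_antisymm
  · refine Ideal.span_le.2 ?_
    rintro f ⟨u, v, huv, rfl⟩
    have h0 := auxL_lin n hn 1 0 _ huv
    have h1 := auxL_lin n hn 0 1 _ huv
    simp only [Pi.sub_apply, mul_sub, Finset.sum_sub_distrib, one_mul, zero_mul, add_zero,
      zero_add, sub_eq_zero] at h0 h1
    let y : ℕ → MvPolynomial (Fin (n + 1)) K ⧸ Pideal n K := fun k =>
      Ideal.Quotient.mk (Pideal n K) (X (xIdx n (k + 1)))
    have hy : ∀ a b, 1 ≤ a → a ≤ b → b + 1 ≤ n → y a * y b = y (a - 1) * y (b + 1) := by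
      intro a b ha hab hb
      simp only [y, ← map_mul]
      refine Ideal.Quotient.eq.2 (Ideal.subset_span ⟨a + 1, b + 1, by omega, by omega, by omega, ?_⟩)
      rw [show a - 1 + 1 = a + 1 - 1 by omega]
    have hyX : ∀ i : Fin (n + 1), y i.val = Ideal.Quotient.mk (Pideal n K) (X i) := by
      intro i
      simp only [y]
      rw [aux_xIdx n i.val (by omega)]
    obtain ⟨s, s1, s2, s3, s4⟩ := aux_ms (n + 1) y Finset.univ u
    obtain ⟨t, t1, t2, t3, t4⟩ := aux_ms (n + 1) y Finset.univ v
    have key := aux_eq n y hy s t (fun i hi => Nat.lt_succ_iff.1 (s1 i hi))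
      (fun i hi => Nat.lt_succ_iff.1 (t1 i hi))
      (by rw [s2, t2]; exact_mod_cast h0) (by rw [s3, t3]; exact_mod_cast h1)
    rw [s4, t4] at key
    simp only [hyX, ← map_pow, ← map_prod] at key
    exact Ideal.Quotient.eq.1 key
  · refine Ideal.span_le.2 ?_
    rintro f ⟨i, j, hi, hij, hj, rfl⟩
    obtain ⟨a, rfl⟩ : ∃ a, i = a + 2 := ⟨i - 2, by omega⟩
    obtain ⟨d, rfl⟩ : ∃ d, j = a + d + 2 := ⟨j - a - 2, by omega⟩
    apply Ideal.subset_span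
    refine ⟨fun i => (if i.val = a + 1 then 1 else 0) + (if i.val = a + d + 1 then 1 else 0),
      fun i => (if i.val = a then 1 else 0) + (if i.val = a + d + 2 then 1 else 0), ?_, ?_⟩
    · convert auxL_mem n a d hj using 1
      funext l
      simp [auxE]
    · rw [aux_prodE n _ _ (by omega) (by omega), aux_prodE n _ _ (by omega) (by omega),
        aux_xIdx n (a + 1) (by omega), aux_xIdx n (a + d + 1) (by omega),
        show a + 2 - 1 = a + 1 by omega, aux_xIdx n a (by omega), aux_xIdx n (a + d + 2) (by omega)]
end
end
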